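/- Let p be an odd prime, F/ℚ_p finite unramified, a ∈ 𝒪_F \ 𝒪_F^p with p ∤ v_F(a), and suppose L_{r,s} = F(ζ_{p^r}, a^{1/p^s}) satisfies the standing hypotheses. With t_{1,2}(r,s) the unique jump of L_{r,s}/L_{r,s−1} and t_{1,1}(r,s) that of L_{r,s}/L_{r−1,s}, for all r > s ≥ 1: t_{1,2}(s,s) = (p^{2s} + p^{2s−2} + p − 1)/(p+1), t_{1,2}(r,s) = (2p^{2s} + p − 1)/(p+1), and for r > s+1: t_{1,1}(r,s) = p^{r+s−1} − (2p^{2s+1} − p + 1)/(p+1). -/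

import Mathlib

/-- The `ℤ_[p]`-algebra structure on a field `L` over `ℚ_[p]`. -/
noncomputable def padicIntAlgebra (p : ℕ) [Fact p.Prime] (L : Type*) [Field L]
    [Algebra ℚ_[p] L] : Algebra ℤ_[p] L :=
  ((algebraMap ℚ_[p] L).comp (algebraMap ℤ_[p] ℚ_[p])).toAlgebra

/-- The ring of integers of a `p`-adic field `L`, i.e. the integral closure of `ℤ_[p]` in `L`. -/
noncomputable def ringOfInt (p : ℕ) [Fact p.Prime] (L : Type*) [Field L]
    [Algebra ℚ_[p] L] : Subring L :=
  letI := padicIntAlgebra p L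
  (integralClosure ℤ_[p] L).toSubring

/-- The maximal ideal of the ring of integers of `L` (its Jacobson radical). -/
noncomputable def maxIdeal (p : ℕ) [Fact p.Prime] (L : Type*) [Field L]
    [Algebra ℚ_[p] L] : Ideal (ringOfInt p L) :=
  (⊥ : Ideal (ringOfInt p L)).jacobson

/-- The `i`-th ramification group (in lower numbering) of `L/K`, as a subset of `Gal(L/K)`:
`σ ∈ G_i` iff `σ x - x ∈ 𝔭_L ^ (i+1)` for every `x` in the ring of integers of `L`. -/
noncomputable def ramSet (p : ℕ) [Fact p.Prime] (K L : Type*) [Field K] [Field L]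
    [Algebra ℚ_[p] L] [Algebra K L] (i : ℕ) : Set (L ≃ₐ[K] L) :=
  {σ | ∀ x : ringOfInt p L, ∃ y ∈ maxIdeal p L ^ (i + 1), (y : L) = σ (x : L) - (x : L)}

/-- `t` is a ramification jump of `L/K` if `G_t ≠ G_{t+1}`. -/
noncomputable def IsRamJump (p : ℕ) [Fact p.Prime] (K L : Type*) [Field K] [Field L]
    [Algebra ℚ_[p] L] [Algebra K L] (t : ℕ) : Prop :=
  ramSet p K L t ≠ ramSet p K L (t + 1)

/-- `L/K` has a unique ramification jump, equal to `t`. -/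
noncomputable def HasUniqueRamJump (p : ℕ) [Fact p.Prime] (K L : Type*) [Field K] [Field L]
    [Algebra ℚ_[p] L] [Algebra K L] (t : ℕ) : Prop :=
  IsRamJump p K L t ∧ ∀ t', IsRamJump p K L t' → t' = t

/-- Same as `HasUniqueRamJump`, with the `K`-algebra structure on `L` given by an
explicit ring homomorphism. -/
noncomputable def HasUniqueRamJumpHom (p : ℕ) [Fact p.Prime] (K L : Type*) [Field K] [Field L]
    [Algebra ℚ_[p] L] (f : K →+* L) (t : ℕ) : Prop :=
  letI := f.toAlgebra
  HasUniqueRamJump p K L t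

/-- The absolute ramification index `e(L|ℚ_p)`, i.e. the valuation of `p` in `L`. -/
noncomputable def eAbs (p : ℕ) [Fact p.Prime] (L : Type*) [Field L] [Algebra ℚ_[p] L] : ℕ :=
  sSup {n : ℕ | Ideal.span {(p : ringOfInt p L)} ≤ maxIdeal p L ^ n}

/-- The normalized valuation `v_L(x)` of an integral element `x` of `L`. -/
noncomputable def valInt (p : ℕ) [Fact p.Prime] (L : Type*) [Field L] [Algebra ℚ_[p] L]
    (x : L) : ℕ :=
  sSup {n : ℕ | ∃ y ∈ maxIdeal p L ^ n, (y : L) = x}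

/-- The subring of elements of norm at most one of an ultrametric normed field. -/
def normSubring (B : Type*) [NormedField B] [IsUltrametricDist B] : Subring B where
  carrier := {x | ‖x‖ ≤ 1}
  mul_mem' {x y} hx hy := by
    simp only [Set.mem_ofPred_eq, norm_mul] at *
    exact mul_le_one₀ hx (norm_nonneg _) hy
  one_mem' := by simp
  add_mem' {x y} hx hy := (IsUltrametricDist.norm_add_le_max x y).trans (max_le hx hy)
  zero_mem' := by simp
  neg_mem' {x} hx := by simpa using hx

/-- The norm on `B` is invariant under `F`-automorphisms, and the nonzero elements of `F` have
norm an integral power of `q`. -/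
structure DiscreteBase (F B : Type*) [Field F] [NormedField B] [Algebra F B] (q : ℝ) : Prop where
  pos : 0 < q
  lt_one : q < 1
  norm_algebraMap : ∀ k : F, k ≠ 0 → ∃ m : ℤ, ‖algebraMap F B k‖ = q ^ m
  norm_map : ∀ (g : B ≃ₐ[F] B) (x : B), ‖g x‖ = ‖x‖

/-- `y` is a uniformizer of the totally ramified extension `K` of `F`. -/
def IsUnif {F B : Type*} [Field F] [NormedField B] [Algebra F B] (q : ℝ)
    (K : IntermediateField F B) (y : B) : Prop :=
  y ∈ K ∧ 0 < Module.finrank F K ∧ ‖y‖ ^ Module.finrank F K = q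

section Core

variable {F B : Type*} [Field F] [NormedField B] [IsUltrametricDist B] [Algebra F B] {q : ℝ}

theorem mem_normSubring {x : B} : x ∈ normSubring B ↔ ‖x‖ ≤ 1 := Iff.rfl

theorem norm_le_of_dvd {x y : normSubring B} (h : x ∣ y) : ‖(y : B)‖ ≤ ‖(x : B)‖ := by
  obtain ⟨z, rfl⟩ := h
  simpa using mul_le_of_le_one_right (norm_nonneg (x : B)) z.2

omit [IsUltrametricDist B] in
theorem IsUnif.norm_pos {K : IntermediateField F B} {y : B} (hq : 0 < q) (hy : IsUnif q K y) :
    0 < ‖y‖ := by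
  rcases (norm_nonneg y).eq_or_lt with h | h
  · have := hy.2.2
    rw [← h, zero_pow hy.2.1.ne'] at this
    exact absurd this hq.ne
  · exact h

omit [IsUltrametricDist B] in
theorem IsUnif.norm_lt_one {K : IntermediateField F B} {y : B} (hq : q < 1)
    (hy : IsUnif q K y) : ‖y‖ < 1 := by
  by_contra! h
  have := one_le_pow₀ h (n := Module.finrank F K)
  rw [hy.2.2] at this
  linarith

omit [IsUltrametricDist B] in
theorem norm_smul_pow (hB : DiscreteBase F B q) {K : IntermediateField F B} {y : B}
    (hy : IsUnif q K y) {k : F} (hk : k ≠ 0) (i : ℕ) :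
    ∃ m : ℤ, ‖algebraMap F B k‖ = q ^ m ∧
      ‖k • y ^ i‖ = ‖y‖ ^ (Module.finrank F K * m + i : ℤ) := by
  obtain ⟨m, hm⟩ := hB.norm_algebraMap k hk
  refine ⟨m, hm, ?_⟩
  rw [Algebra.smul_def, norm_mul, hm, ← hy.2.2, norm_pow,
    zpow_add₀ (hy.norm_pos hB.pos).ne', zpow_mul, zpow_natCast, zpow_natCast]

omit [IsUltrametricDist B] in
/-- Terms of `y`-adic expansions have distinct norms. -/
theorem norm_term_ne (hB : DiscreteBase F B q) {K : IntermediateField F B} {y : B}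
    (hy : IsUnif q K y) {k l : F} (hk : k ≠ 0) (hl : l ≠ 0) {i j : ℕ}
    (hi : i < Module.finrank F K) (hj : j < Module.finrank F K) (hij : i ≠ j) :
    ‖k • y ^ i‖ ≠ ‖l • y ^ j‖ := by
  obtain ⟨m, -, hm⟩ := norm_smul_pow hB hy hk i
  obtain ⟨m', -, hm'⟩ := norm_smul_pow hB hy hl j
  rw [hm, hm']
  intro h
  have h := zpow_right_injective₀ (hy.norm_pos hB.pos) (hy.norm_lt_one hB.lt_one).ne h
  apply hij
  have h1 : (i : ℤ) % (Module.finrank F K) = (j : ℤ) % (Module.finrank F K) := by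
    have := congrArg (· % (Module.finrank F K : ℤ)) h
    simpa using this
  rw [Int.emod_eq_of_lt (by positivity) (by exact_mod_cast hi),
    Int.emod_eq_of_lt (by positivity) (by exact_mod_cast hj)] at h1
  exact_mod_cast h1

theorem norm_term_le (hB : DiscreteBase F B q) {K : IntermediateField F B} {y : B}
    (hy : IsUnif q K y) (c : Fin (Module.finrank F K) → F) (i : Fin (Module.finrank F K)) :
    ‖c i • y ^ (i : ℕ)‖ ≤ ‖∑ j, c j • y ^ (j : ℕ)‖ := by
  classical
  by_cases hc : c i = 0
  · simp [hc]
  set s := Finset.univ.filter fun j ↦ c j ≠ 0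
  have hi : i ∈ s := by simp [s, hc]
  have hs : ∑ j, c j • y ^ (j : ℕ) = ∑ j ∈ s, c j • y ^ (j : ℕ) := by
    refine (Finset.sum_subset (Finset.subset_univ _) fun j _ hj ↦ ?_).symm
    have : c j = 0 := by simpa [s] using hj
    simp [this]
  rw [hs, IsUltrametricDist.norm_sum_eq_sup'_of_pairwise_ne ⟨i, hi⟩]
  · exact Finset.le_sup' (fun j ↦ ‖c j • y ^ (j : ℕ)‖) hi
  · intro j hj k hk hjk
    exact norm_term_ne hB hy (by simpa [s] using hj) (by simpa [s] using hk) j.2 k.2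
      (fun h ↦ hjk (Fin.ext h))

/-- The ring of integers of `K` is generated over that of `F` by any uniformizer. -/
theorem exists_expansion (hB : DiscreteBase F B q) {K : IntermediateField F B} {y : B}
    (hy : IsUnif q K y) {z : B} (hz : z ∈ K) (hz1 : ‖z‖ ≤ 1) :
    ∃ c : Fin (Module.finrank F K) → F, (∀ i, ‖algebraMap F B (c i)‖ ≤ 1) ∧
      z = ∑ i, c i • y ^ (i : ℕ) := by
  have hli : LinearIndependent F fun i : Fin (Module.finrank F K) ↦ (⟨y, hy.1⟩ : K) ^ (i : ℕ) := by
    rw [Fintype.linearIndependent_iff]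
    intro c hc i
    have h0 : ∑ j, c j • y ^ (j : ℕ) = 0 := by
      have := congrArg (algebraMap K B) hc
      simpa [Algebra.smul_def, ← IsScalarTower.algebraMap_apply] using this
    have := norm_term_le hB hy c i
    rw [h0, norm_zero] at this
    have := norm_le_zero_iff.1 this
    have hy0 : y ≠ 0 := norm_pos_iff.1 (hy.norm_pos hB.pos)
    simpa [hy0] using this
  have : Nonempty (Fin (Module.finrank F K)) := ⟨⟨0, hy.2.1⟩⟩
  let b := basisOfLinearIndependentOfCardEqFinrank hli (by simp)
  have hsum : z = ∑ i, b.repr ⟨z, hz⟩ i • y ^ (i : ℕ) := by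
    have := congrArg (algebraMap K B) (b.sum_repr ⟨z, hz⟩)
    simpa [b, Algebra.smul_def, ← IsScalarTower.algebraMap_apply] using this.symm
  refine ⟨fun i ↦ b.repr ⟨z, hz⟩ i, fun i ↦ ?_, hsum⟩
  by_cases hc : b.repr ⟨z, hz⟩ i = 0
  · simp [hc]
  obtain ⟨m, hm, hm'⟩ := norm_smul_pow hB hy hc i
  have hle := norm_term_le hB hy (fun i ↦ b.repr ⟨z, hz⟩ i) i
  rw [← hsum, hm'] at hle
  have h0 := hle.trans hz1
  have hpos := hy.norm_pos hB.pos
  rw [← zpow_zero ‖y‖, zpow_le_zpow_iff_right_of_lt_one₀ hpos (hy.norm_lt_one hB.lt_one)] at h0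
  have : (0 : ℤ) ≤ m := by
    by_contra! hlt
    have h1 := i.2
    nlinarith
  rw [hm]
  exact zpow_le_one₀ hB.pos hB.lt_one.le this |>.trans le_rfl

theorem norm_pow_sub_pow_le {a b : B} (ha : ‖a‖ ≤ 1) (hb : ‖b‖ ≤ 1) (i : ℕ) :
    ‖a ^ i - b ^ i‖ ≤ ‖a - b‖ := by
  simpa using norm_le_of_dvd (sub_dvd_pow_sub_pow (⟨a, ha⟩ : normSubring B) ⟨b, hb⟩ i)

/-- An automorphism moves a uniformizer at least as much as any other integer. -/
theorem norm_map_sub_le (hB : DiscreteBase F B q) {K : IntermediateField F B} {y : B}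
    (hy : IsUnif q K y) (g : B ≃ₐ[F] B) {z : B} (hz : z ∈ K) (hz1 : ‖z‖ ≤ 1) :
    ‖g z - z‖ ≤ ‖g y - y‖ := by
  obtain ⟨c, hc, rfl⟩ := exists_expansion hB hy hz hz1
  rw [map_sum, ← Finset.sum_sub_distrib]
  refine IsUltrametricDist.norm_sum_le_of_forall_le_of_nonneg (norm_nonneg _) fun i _ ↦ ?_
  rw [map_smul, map_pow, ← smul_sub, Algebra.smul_def, norm_mul]
  have h1 := (hy.norm_lt_one hB.lt_one).le
  calc _ ≤ 1 * ‖(g y) ^ (i : ℕ) - y ^ (i : ℕ)‖ :=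
        mul_le_mul_of_nonneg_right (hc i) (norm_nonneg _)
    _ ≤ _ := by
        rw [one_mul]
        exact norm_pow_sub_pow_le (by rwa [hB.norm_map]) h1 _

/-- If `y` is an integer of `K = F(x)`, then `w - y` is divisible by the product of the
differences between `x` and distinct elements `h x` for which `h y = w`. -/
theorem norm_sub_le_prod (hB : DiscreteBase F B q) {K : IntermediateField F B} {x : B}
    (hx : IsUnif q K x) {y w : B} (hy : y ∈ K) (hy1 : ‖y‖ ≤ 1) {n : ℕ} (hn : 0 < n)
    (h : ℕ → B ≃ₐ[F] B) (hh : ∀ i < n, h i y = w)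
    (hinj : ∀ i < n, ∀ j < n, h i x = h j x → i = j) :
    ‖w - y‖ ≤ ∏ i ∈ Finset.range n, ‖h i x - x‖ := by
  obtain ⟨c, hc, hsum⟩ := exists_expansion hB hx hy hy1
  have hx1 := (hx.norm_lt_one hB.lt_one).le
  have hw1 : ‖w‖ ≤ 1 := by rw [← hh 0 hn, hB.norm_map]; exact hy1
  let r : ℕ → normSubring B := fun i ↦ ⟨h i x, by rw [mem_normSubring, hB.norm_map]; exact hx1⟩
  let x' : normSubring B := ⟨x, hx1⟩
  let w' : normSubring B := ⟨w, hw1⟩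
  let P : Polynomial (normSubring B) :=
    ∑ i : Fin (Module.finrank F K), Polynomial.C ⟨_, hc i⟩ * Polynomial.X ^ (i : ℕ) -
      Polynomial.C w'
  have heval (z : normSubring B) : ((P.eval z : normSubring B) : B) =
      ∑ i, c i • (z : B) ^ (i : ℕ) - w := by
    simp [P, Polynomial.eval_finsetSum, Algebra.smul_def, w']
  have hroot : ∀ i < n, P.eval (r i) = 0 := fun i hi ↦ by
    apply Subtype.ext
    rw [heval, ← hh i hi, hsum, map_sum]
    simp [r]
  have hdvd : (∏ i ∈ Finset.range n, (Polynomial.X - Polynomial.C (r i))) ∣ P := by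
    by_cases hP : P = 0
    · simp [hP]
    have : ((Finset.range n).val.map r) ≤ P.roots := by
      rw [Multiset.le_iff_subset]
      · intro a ha
        obtain ⟨i, hi, rfl⟩ := Multiset.mem_map.1 ha
        rw [Polynomial.mem_roots hP]
        exact hroot i (Finset.mem_range.1 hi)
      · refine Multiset.Nodup.map_on (fun i hi j hj hij ↦ ?_) (Finset.nodup _)
        exact hinj i (Finset.mem_range.1 hi) j (Finset.mem_range.1 hj) (congrArg Subtype.val hij)
    have := (Multiset.prod_X_sub_C_dvd_iff_le_roots hP _).2 this
    rwa [Multiset.map_map] at this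
  have h2 := norm_le_of_dvd (Polynomial.eval_dvd (x := x') hdvd)
  rw [heval, ← hsum] at h2
  rw [norm_sub_rev]
  refine h2.trans_eq ?_
  simp only [Polynomial.eval_prod, Polynomial.eval_sub, Polynomial.eval_X, Polynomial.eval_C,
    SubmonoidClass.coe_finsetProd, norm_prod]
  exact Finset.prod_congr rfl fun i _ ↦ norm_sub_rev _ _

/-- If the conjugates `h i x` of `x` are the roots of a polynomial over `K`, then the product of the
differences between `x` and `g (h i x)` is divisible by `g y - y` for a uniformizer `y` of `K`. -/
theorem prod_le_norm_sub (hB : DiscreteBase F B q) {K : IntermediateField F B} {x y : B}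
    (hx1 : ‖x‖ ≤ 1) (hy : IsUnif q K y) {n : ℕ} (hn : 0 < n) (h : ℕ → B ≃ₐ[F] B)
    (h0 : h 0 = 1)
    (hcoeff : ∀ k, (∏ i ∈ Finset.range n, (Polynomial.X - Polynomial.C (h i x))).coeff k ∈ K)
    (g : B ≃ₐ[F] B) :
    ∏ i ∈ Finset.range n, ‖g (h i x) - x‖ ≤ ‖g y - y‖ := by
  let r : ℕ → normSubring B := fun i ↦ ⟨h i x, by rw [mem_normSubring, hB.norm_map]; exact hx1⟩
  set f := ∏ i ∈ Finset.range n, (Polynomial.X - Polynomial.C (h i x)) with hf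
  let f' := ∏ i ∈ Finset.range n, (Polynomial.X - Polynomial.C (r i))
  have hff : f = f'.map (normSubring B).subtype := by
    simp [f, f', Polynomial.map_prod, r]
  have hc1 (k : ℕ) : ‖f.coeff k‖ ≤ 1 := by
    rw [hff, Polynomial.coeff_map]
    exact (f'.coeff k).2
  have e1 : ∑ k ∈ Finset.range (f.natDegree + 1), f.coeff k * x ^ k = 0 := by
    rw [← Polynomial.eval_eq_sum_range, hf, Polynomial.eval_prod]
    exact Finset.prod_eq_zero (Finset.mem_range.2 hn) (by simp [h0])
  have e2 : ∏ i ∈ Finset.range n, (x - g (h i x)) =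
      ∑ k ∈ Finset.range (f.natDegree + 1), g (f.coeff k) * x ^ k := by
    have := Polynomial.eval₂_eq_sum_range (p := f) (g : B →+* B) x
    rw [RingHom.coe_coe] at this
    rw [← this, ← Polynomial.eval_map, hf, Polynomial.map_prod, Polynomial.eval_prod]
    simp
  have e3 : ∏ i ∈ Finset.range n, ‖g (h i x) - x‖ =
      ‖∑ k ∈ Finset.range (f.natDegree + 1), (g (f.coeff k) - f.coeff k) * x ^ k‖ := by
    simp_rw [norm_sub_rev _ x]
    rw [← norm_prod, e2]
    simp_rw [sub_mul]
    rw [Finset.sum_sub_distrib, e1, sub_zero]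
  rw [e3]
  refine IsUltrametricDist.norm_sum_le_of_forall_le_of_nonneg (norm_nonneg _) fun k _ ↦ ?_
  rw [norm_mul, norm_pow]
  exact (mul_le_of_le_one_right (norm_nonneg _) (pow_le_one₀ (norm_nonneg _) hx1)).trans
    (norm_map_sub_le hB hy g (hcoeff k) (hc1 k))

end Core

section Isometries

variable {X : Type*} [PseudoMetricSpace X] [IsUltrametricDist X]

theorem dist_iterate_le {f : X → X} (hf : Isometry f) (x : X) (k : ℕ) :
    dist (f^[k] x) x ≤ dist (f x) x := by
  induction k with
  | zero => simp
  | succ k ih =>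
    rw [Function.iterate_succ_apply']
    refine (dist_triangle_max (f (f^[k] x)) (f x) x).trans (max_le ?_ le_rfl)
    rwa [hf.dist_eq]

omit [IsUltrametricDist X] in
theorem isometry_iterate {f : X → X} (hf : Isometry f) (k : ℕ) : Isometry f^[k] := by
  induction k with
  | zero => exact isometry_id
  | succ k ih => exact ih.comp hf

omit [PseudoMetricSpace X] [IsUltrametricDist X] in
theorem iterate_eq_self {f : X → X} {p m : ℕ} (hf : f^[p] = id) (hm : m % p = 1) : f^[m] = f := by
  rw [← Nat.mod_add_div m p, hm, Function.iterate_add, Function.iterate_mul, hf,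
    Function.iterate_id, Function.iterate_one, Function.comp_id]

theorem dist_comp_iterate_le {s t : X → X} (hs : Isometry s) (ht : Isometry t)
    (hst : Function.Commute s t) {p : ℕ} (htp : t^[p] = id) {i j : ℕ} (hij : i * j % p = 1)
    (x : X) : dist (t (s^[i] x)) x ≤ dist (s (t^[j] x)) x := by
  have h1 := dist_iterate_le (hs.comp (isometry_iterate ht j)) x i
  rwa [(hst.iterate_right j).comp_iterate, ← Function.iterate_mul, mul_comm j,
    iterate_eq_self htp hij, Function.comp_apply, hst.iterate_left i x] at h1

theorem prod_dist_comp_iterate_eq {s t : X → X} (hs : Isometry s) (ht : Isometry t)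
    (hst : Function.Commute s t) {p : ℕ} [Fact p.Prime] (hsp : s^[p] = id) (htp : t^[p] = id)
    (x : X) :
    ∏ j ∈ (Finset.range p).erase 0, dist (s (t^[j] x)) x =
      ∏ i ∈ (Finset.range p).erase 0, dist (t (s^[i] x)) x := by
  have key (j : ℕ) (hj : j ∈ (Finset.range p).erase 0) :
      ((j : ZMod p)⁻¹).val ∈ (Finset.range p).erase 0 ∧
      ((((j : ZMod p)⁻¹).val : ZMod p)⁻¹).val = j ∧ ((j : ZMod p)⁻¹).val * j % p = 1 := by
    obtain ⟨h0, hlt⟩ := Finset.mem_erase.1 hj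
    have hlt := Finset.mem_range.1 hlt
    have hj0 : (j : ZMod p) ≠ 0 := by
      rw [Ne, ZMod.natCast_eq_zero_iff]
      exact fun h ↦ h0 (Nat.eq_zero_of_dvd_of_lt h hlt)
    refine ⟨?_, ?_, ?_⟩
    · rw [Finset.mem_erase, Finset.mem_range]
      refine ⟨?_, ZMod.val_lt _⟩
      rw [Ne, ZMod.val_eq_zero]
      exact inv_ne_zero hj0
    · rw [ZMod.natCast_zmod_val, inv_inv, ZMod.val_natCast, Nat.mod_eq_of_lt hlt]
    · have h1 : ((((j : ZMod p)⁻¹).val * j : ℕ) : ZMod p) = (1 : ℕ) := by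
        push_cast
        rw [ZMod.natCast_zmod_val, inv_mul_cancel₀ hj0]
      have := (ZMod.natCast_eq_natCast_iff' _ _ _).1 h1
      rwa [Nat.mod_eq_of_lt (Fact.out : p.Prime).one_lt] at this
  refine Finset.prod_bij' (fun j _ ↦ ((j : ZMod p)⁻¹).val) (fun j _ ↦ ((j : ZMod p)⁻¹).val)
    (fun j hj ↦ (key j hj).1) (fun j hj ↦ (key j hj).1) (fun j hj ↦ (key j hj).2.1)
    (fun j hj ↦ (key j hj).2.1) fun j hj ↦ le_antisymm ?_ ?_
  · exact dist_comp_iterate_le ht hs hst.symm hsp (by rw [mul_comm]; exact (key j hj).2.2) x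
  · exact dist_comp_iterate_le hs ht hst htp (key j hj).2.2 x

/-- Two commuting isometries of prime order: the displacements of `x` under `s` and `t` are
determined by the products of the displacements over the cosets of the groups they generate. -/
theorem dist_eq_of_prod_lt {s t : X → X} (hs : Isometry s) (ht : Isometry t)
    (hst : Function.Commute s t) {p : ℕ} [hp : Fact p.Prime] (hsp : s^[p] = id)
    (htp : t^[p] = id) {x : X}
    (hlt : ∏ i ∈ Finset.range p, dist (t (s^[i] x)) x <
      ∏ j ∈ Finset.range p, dist (s (t^[j] x)) x) :
    ∏ j ∈ Finset.range p, dist (s (t^[j] x)) x = dist (s x) x ^ p ∧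
      ∏ i ∈ Finset.range p, dist (t (s^[i] x)) x = dist (t x) x * dist (s x) x ^ (p - 1) := by
  have h0 : 0 ∈ Finset.range p := Finset.mem_range.2 hp.out.pos
  rw [← Finset.mul_prod_erase _ _ h0, ← Finset.mul_prod_erase _ _ h0,
    ← prod_dist_comp_iterate_eq hs ht hst hsp htp] at hlt ⊢
  simp only [Function.iterate_zero, id] at hlt ⊢
  have hsu : dist (t x) x < dist (s x) x :=
    lt_of_mul_lt_mul_right hlt (Finset.prod_nonneg fun _ _ ↦ dist_nonneg)
  have hprod : ∏ j ∈ (Finset.range p).erase 0, dist (s (t^[j] x)) x = dist (s x) x ^ (p - 1) := by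
    rw [Finset.prod_congr rfl (g := fun _ ↦ dist (s x) x), Finset.prod_const,
      Finset.card_erase_of_mem h0, Finset.card_range]
    intro j _
    have h1 : dist (s (t^[j] x)) (s x) < dist (s x) x := by
      rw [hs.dist_eq]
      exact (dist_iterate_le ht x j).trans_lt hsu
    refine le_antisymm ((dist_triangle_max _ (s x) _).trans (max_le h1.le le_rfl)) ?_
    by_contra! h2
    have := dist_triangle_max (s x) (s (t^[j] x)) x
    rw [dist_comm (s x) (s (t^[j] x))] at this
    exact absurd this (not_le.2 (max_lt h1 h2))
  rw [hprod]
  exact ⟨by rw [← pow_succ', Nat.sub_add_cancel hp.out.one_le], rfl⟩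

end Isometries

section Core

variable {F B : Type*} [Field F] [NormedField B] [IsUltrametricDist B] [Algebra F B] {q : ℝ}

omit [IsUltrametricDist B] in
/-- An intermediate field of prime index in `M` contains the elements of `M` fixed by an
automorphism which fixes it and moves `M`. -/
theorem mem_of_fixed {p : ℕ} [hp : Fact p.Prime] {K M : IntermediateField F B}
    (hM : 0 < Module.finrank F M) (hKM : K ≤ M)
    (hd : Module.finrank F K * p = Module.finrank F M) {τ : B ≃ₐ[F] B} (hτ : ∀ z ∈ K, τ z = z)
    {x : B} (hx : x ∈ M) (hτx : τ x ≠ x) {z : B} (hz : z ∈ M) (hτz : τ z = z) : z ∈ K := by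
  let K' := M ⊓ IntermediateField.fixedField (Subgroup.zpowers τ)
  have hmem (w : B) : w ∈ K' ↔ w ∈ M ∧ τ w = w := by
    simp only [K', IntermediateField.mem_inf, IntermediateField.mem_fixedField_iff]
    refine and_congr_right fun _ ↦ ⟨fun h ↦ h τ (Subgroup.mem_zpowers τ), fun h g hg ↦ ?_⟩
    have : Subgroup.zpowers τ ≤ MulAction.stabilizer (B ≃ₐ[F] B) w := by
      rw [Subgroup.zpowers_le, MulAction.mem_stabilizer_iff]
      exact h
    exact this hg
  have hfin : FiniteDimensional F M := Module.finite_of_finrank_pos hM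
  have hle : K ≤ K' := fun w hw ↦ (hmem w).2 ⟨hKM hw, hτ w hw⟩
  have hle' : K' ≤ M := inf_le_left
  have : FiniteDimensional F K' :=
    Module.Finite.of_injective (IntermediateField.inclusion hle').toLinearMap
      (IntermediateField.inclusion hle').injective
  have hK0 : 0 < Module.finrank F K := Nat.pos_of_mul_pos_right (hd ▸ hM)
  obtain ⟨a, ha⟩ := IntermediateField.finrank_dvd_of_le_right hle
  obtain ⟨b, hb⟩ := IntermediateField.finrank_dvd_of_le_right hle'
  have hab : a * b = p := by
    rw [ha, ← hd, mul_assoc] at hb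
    exact (Nat.eq_of_mul_eq_mul_left hK0 hb).symm
  rcases (Nat.dvd_prime hp.out).1 ⟨b, hab.symm⟩ with h1 | h1
  · have : K = K' := IntermediateField.eq_of_le_of_finrank_eq hle (by rw [ha, h1, mul_one])
    rw [this]
    exact (hmem z).2 ⟨hz, hτz⟩
  · have : K' = M := IntermediateField.eq_of_le_of_finrank_eq hle' (by rw [ha, h1, hd])
    exact absurd ((hmem x).1 (this ▸ hx)).2 hτx

/-- Herbrand's formula for an extension `M / K` of prime degree. -/
theorem norm_sub_eq_prod {p : ℕ} [hp : Fact p.Prime] (hB : DiscreteBase F B q)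
    {K M : IntermediateField F B} {x y : B} (hx : IsUnif q M x) (hy : IsUnif q K y) (hKM : K ≤ M)
    (hd : Module.finrank F K * p = Module.finrank F M) (σ : B ≃ₐ[F] B) {τ : B ≃ₐ[F] B}
    (hτ : ∀ z ∈ K, τ z = z) (hτM : ∀ z ∈ M, τ z ∈ M) (hτp : τ^[p] x = x) (hτx : τ x ≠ x) :
    ‖σ y - y‖ = ∏ j ∈ Finset.range p, ‖σ (τ^[j] x) - x‖ := by
  have hx1 := (hx.norm_lt_one hB.lt_one).le
  have hy1 := (hy.norm_lt_one hB.lt_one).le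
  have hiter (z : B) (hz : τ z = z) (j : ℕ) : τ^[j] z = z := Function.iterate_fixed hz j
  refine le_antisymm ?_ ?_
  · refine (norm_sub_le_prod hB hx (hKM hy.1) hy1 hp.out.pos (fun j ↦ σ * τ ^ j)
      (fun j _ ↦ ?_) fun i hi j hj hij ↦ ?_).trans_eq ?_
    · simp [hiter y (hτ y hy.1)]
    · simp only [AlgEquiv.mul_apply, AlgEquiv.coe_pow, EmbeddingLike.apply_eq_iff_eq] at hij
      have hmin : Function.minimalPeriod τ x = p := by
        refine Function.minimalPeriod_eq_prime hτp hτx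
      exact Function.iterate_injOn_Iio_minimalPeriod (f := τ) (x := x) (by simpa [hmin] using hi)
        (by simpa [hmin] using hj) hij
    · simp
  · have hxM (j : ℕ) : τ^[j] x ∈ M := by
      induction j with
      | zero => exact hx.1
      | succ j ih => rw [Function.iterate_succ_apply']; exact hτM _ ih
    have := prod_le_norm_sub hB hx1 hy hp.out.pos (fun j ↦ τ ^ j) (pow_zero τ) (fun k ↦ ?_) σ
    · simpa using this
    simp only [AlgEquiv.coe_pow]
    set f := ∏ i ∈ Finset.range p, (Polynomial.X - Polynomial.C (τ^[i] x)) with hf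
    refine mem_of_fixed hx.2.1 hKM hd hτ hx.1 hτx ?_ ?_
    · have : f = (∏ i ∈ Finset.range p,
          (Polynomial.X - Polynomial.C (⟨τ^[i] x, hxM i⟩ : M))).map (algebraMap M B) := by
        simp [hf, Polynomial.map_prod]
      rw [this, Polynomial.coeff_map]
      exact SetLike.coe_mem _
    · have : f.map (τ : B →+* B) = f := by
        have h1 : f.map (τ : B →+* B) =
            ∏ i ∈ Finset.range p, (Polynomial.X - Polynomial.C (τ^[i + 1] x)) := by
          simp only [hf, Polynomial.map_prod, Polynomial.map_sub, Polynomial.map_X,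
            Polynomial.map_C, Function.iterate_succ_apply', RingHom.coe_coe]
        have h2 := (Finset.prod_range_succ'
          (fun i ↦ Polynomial.X - Polynomial.C (τ^[i] x)) p).symm.trans
          (Finset.prod_range_succ (fun i ↦ Polynomial.X - Polynomial.C (τ^[i] x)) p)
        rw [hτp, Function.iterate_zero, id] at h2
        rw [h1, mul_right_cancel₀ (Polynomial.X_sub_C_ne_zero x) h2]
      conv_rhs => rw [← this]
      rw [Polynomial.coeff_map]
      rfl

end Core

section Core

variable {F B : Type*} [Field F] [NormedField B] [Algebra F B] {q : ℝ}

theorem eq_on_adjoin {S : Set B} {g h : B →ₐ[F] B} (hS : ∀ b ∈ S, g b = h b) {z : B}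
    (hz : z ∈ IntermediateField.adjoin F S) : g z = h z := by
  induction hz using IntermediateField.adjoin_induction with
  | mem b hb => exact hS b hb
  | algebraMap k => simp
  | add x y _ _ hx hy => simp [hx, hy]
  | inv x _ hx => simp [hx]
  | mul x y _ _ hx hy => simp [hx, hy]

theorem map_mem_adjoin {S : Set B} {g : B →ₐ[F] B}
    (hS : ∀ b ∈ S, g b ∈ IntermediateField.adjoin F S) {z : B}
    (hz : z ∈ IntermediateField.adjoin F S) : g z ∈ IntermediateField.adjoin F S := by
  induction hz using IntermediateField.adjoin_induction with
  | mem b hb => exact hS b hb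
  | algebraMap k => simp
  | add x y _ _ hx hy => simpa using add_mem hx hy
  | inv x _ hx => simpa using inv_mem hx
  | mul x y _ _ hx hy => simpa using mul_mem hx hy

theorem iterate_eq_pow_mul {g : B ≃ₐ[F] B} {b ω : B} (hb : g b = ω * b) (hω : g ω = ω) (n : ℕ) :
    g^[n] b = ω ^ n * b := by
  induction n with
  | zero => simp
  | succ n ih => rw [Function.iterate_succ_apply', ih, map_mul, map_pow, hω, hb]; ring

/-- The jumps of the two upper steps of a totally ramified square of prime steps, in terms of
the jumps of the lower steps. -/
theorem square_norm_sub {p : ℕ} [hp : Fact p.Prime] [IsUltrametricDist B]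
    (hB : DiscreteBase F B q) {b₁ b₂ ω₁ ω₂ : B} {K₁ K₂ M : IntermediateField F B}
    (hM : M = IntermediateField.adjoin F {b₁, b₂}) (hK₁ : K₁ ≤ M) (hK₂ : K₂ ≤ M)
    (hd₁ : Module.finrank F K₁ * p = Module.finrank F M)
    (hd₂ : Module.finrank F K₂ * p = Module.finrank F M)
    {x y₁ y₂ : B} (hx : IsUnif q M x) (hy₁ : IsUnif q K₁ y₁) (hy₂ : IsUnif q K₂ y₂)
    (hω₁ : ω₁ ∈ M) (hω₂ : ω₂ ∈ M) (hω₁p : ω₁ ^ p = 1) (hω₂p : ω₂ ^ p = 1) {σ τ : B ≃ₐ[F] B}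
    (hσK : ∀ z ∈ K₂, σ z = z) (hτK : ∀ z ∈ K₁, τ z = z)
    (hσ₁ : σ b₁ = ω₁ * b₁) (hσ₂ : σ b₂ = b₂) (hτ₁ : τ b₁ = b₁) (hτ₂ : τ b₂ = ω₂ * b₂)
    (hσω₁ : σ ω₁ = ω₁) (hσω₂ : σ ω₂ = ω₂) (hτω₁ : τ ω₁ = ω₁) (hτω₂ : τ ω₂ = ω₂)
    {t₁ t₂ : ℕ} (ht : t₁ < t₂) (ht₁ : ‖σ y₁ - y₁‖ = ‖y₁‖ ^ (t₁ + 1))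
    (ht₂ : ‖τ y₂ - y₂‖ = ‖y₂‖ ^ (t₂ + 1)) :
    ‖σ x - x‖ = ‖x‖ ^ (t₁ + 1) ∧ ‖τ x - x‖ = ‖x‖ ^ (t₁ + p * (t₂ - t₁) + 1) := by
  have hb₁ : b₁ ∈ M := hM ▸ IntermediateField.subset_adjoin F _ (by simp)
  have hb₂ : b₂ ∈ M := hM ▸ IntermediateField.subset_adjoin F _ (by simp)
  have hagree {g h : B →ₐ[F] B} (h₁ : g b₁ = h b₁) (h₂ : g b₂ = h b₂) (z : B) (hz : z ∈ M) :
      g z = h z := by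
    rw [hM] at hz
    refine eq_on_adjoin ?_ hz
    rintro b (rfl | rfl)
    exacts [h₁, h₂]
  have hstable {g : B ≃ₐ[F] B} (h₁ : g b₁ ∈ M) (h₂ : g b₂ ∈ M) (z : B) (hz : z ∈ M) :
      g z ∈ M := by
    rw [hM] at hz h₁ h₂ ⊢
    refine map_mem_adjoin (g := (g : B →ₐ[F] B)) ?_ hz
    rintro b (rfl | rfl)
    exacts [h₁, h₂]
  have hσM : ∀ z ∈ M, σ z ∈ M := hstable (by rw [hσ₁]; exact mul_mem hω₁ hb₁) (by rwa [hσ₂])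
  have hτM : ∀ z ∈ M, τ z ∈ M := hstable (by rwa [hτ₁]) (by rw [hτ₂]; exact mul_mem hω₂ hb₂)
  have hcomm : ∀ z ∈ M, σ (τ z) = τ (σ z) := fun z hz ↦
    hagree (g := ((σ * τ : B ≃ₐ[F] B) : B →ₐ[F] B)) (h := ((τ * σ : B ≃ₐ[F] B) : B →ₐ[F] B))
      (by simp [hσ₁, hτ₁, hτω₁]) (by simp [hσ₂, hτ₂, hσω₂]) z hz
  have hσp : ∀ z ∈ M, σ^[p] z = z := fun z hz ↦ by
    have := hagree (g := ((σ ^ p : B ≃ₐ[F] B) : B →ₐ[F] B)) (h := AlgHom.id F B)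
      (by simp [iterate_eq_pow_mul hσ₁ hσω₁, hω₁p]) (by simp [Function.iterate_fixed hσ₂]) z hz
    simpa using this
  have hτp : ∀ z ∈ M, τ^[p] z = z := fun z hz ↦ by
    have := hagree (g := ((τ ^ p : B ≃ₐ[F] B) : B →ₐ[F] B)) (h := AlgHom.id F B)
      (by simp [Function.iterate_fixed hτ₁]) (by simp [iterate_eq_pow_mul hτ₂ hτω₂, hω₂p]) z hz
    simpa using this
  have hx0 := hx.norm_pos hB.pos
  have hmove {g : B ≃ₐ[F] B} {K : IntermediateField F B} {y : B} {t : ℕ} (hK : K ≤ M)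
      (hy : IsUnif q K y) (h : ‖g y - y‖ = ‖y‖ ^ (t + 1)) : g x ≠ x := by
    intro hgx
    have := norm_map_sub_le hB hx g (hK hy.1) (hy.norm_lt_one hB.lt_one).le
    rw [hgx, sub_self, norm_zero, h] at this
    exact absurd this (not_le.2 (pow_pos (hy.norm_pos hB.pos) _))
  have hnorm {K : IntermediateField F B} {y : B} (hy : IsUnif q K y)
      (hd : Module.finrank F K * p = Module.finrank F M) : ‖y‖ = ‖x‖ ^ p := by
    refine (pow_left_inj₀ (norm_nonneg _) (by positivity) hy.2.1.ne').1 ?_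
    rw [hy.2.2, ← pow_mul, mul_comm p, hd, hx.2.2]
  have e₁ := norm_sub_eq_prod hB hx hy₁ hK₁ hd₁ σ hτK hτM (hτp x hx.1) (hmove hK₂ hy₂ ht₂)
  have e₂ := norm_sub_eq_prod hB hx hy₂ hK₂ hd₂ τ hσK hσM (hσp x hx.1) (hmove hK₁ hy₁ ht₁)
  rw [ht₁, hnorm hy₁ hd₁, ← pow_mul] at e₁
  rw [ht₂, hnorm hy₂ hd₂, ← pow_mul] at e₂
  let s : M → M := fun z ↦ ⟨σ z, hσM z z.2⟩
  let t : M → M := fun z ↦ ⟨τ z, hτM z z.2⟩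
  let x' : M := ⟨x, hx.1⟩
  have hdist (z w : M) : dist z w = ‖(z : B) - w‖ := by rw [Subtype.dist_eq, dist_eq_norm]
  have hs : Isometry s := Isometry.of_dist_eq fun z w ↦ by
    rw [hdist, hdist, ← hB.norm_map σ ((z : B) - w), map_sub]
  have ht' : Isometry t := Isometry.of_dist_eq fun z w ↦ by
    rw [hdist, hdist, ← hB.norm_map τ ((z : B) - w), map_sub]
  have hst : Function.Commute s t := fun z ↦ Subtype.ext (hcomm z z.2)
  have hsc (n : ℕ) (z : M) : ((s^[n] z : M) : B) = σ^[n] z :=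
    (Function.Semiconj.iterate_right (f := ((↑) : M → B)) (fun _ ↦ rfl) n) z
  have htc (n : ℕ) (z : M) : ((t^[n] z : M) : B) = τ^[n] z :=
    (Function.Semiconj.iterate_right (f := ((↑) : M → B)) (fun _ ↦ rfl) n) z
  have hsp : s^[p] = id := funext fun z ↦ Subtype.ext ((hsc p z).trans (hσp z z.2))
  have htp : t^[p] = id := funext fun z ↦ Subtype.ext ((htc p z).trans (hτp z z.2))
  have c₁ : ∏ j ∈ Finset.range p, dist (s (t^[j] x')) x' = ‖x‖ ^ (p * (t₁ + 1)) := by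
    rw [e₁]
    refine Finset.prod_congr rfl fun j _ ↦ ?_
    rw [hdist, ← htc j x']
  have c₂ : ∏ j ∈ Finset.range p, dist (t (s^[j] x')) x' = ‖x‖ ^ (p * (t₂ + 1)) := by
    rw [e₂]
    refine Finset.prod_congr rfl fun j _ ↦ ?_
    rw [hdist, ← hsc j x']
  have hp0 := hp.out.pos
  obtain ⟨r₁, r₂⟩ := dist_eq_of_prod_lt hs ht' hst hsp htp (x := x') (by
    rw [c₁, c₂]
    exact pow_lt_pow_right_of_lt_one₀ hx0 (hx.norm_lt_one hB.lt_one)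
      (Nat.mul_lt_mul_of_pos_left (by omega) hp0))
  have r₃ : dist (s x') x' = ‖x‖ ^ (t₁ + 1) := by
    refine (pow_left_inj₀ dist_nonneg (by positivity) hp0.ne').1 ?_
    rw [← r₁, c₁, ← pow_mul, mul_comm]
  refine ⟨(hdist (s x') x').symm.trans r₃, (hdist (t x') x').symm.trans ?_⟩
  rw [c₂, r₃, ← pow_mul] at r₂
  refine mul_right_cancel₀ (pow_ne_zero ((t₁ + 1) * (p - 1)) hx0.ne') (r₂.symm.trans ?_)
  rw [← pow_add]
  congr 1
  obtain ⟨d, rfl⟩ := Nat.exists_eq_add_of_lt ht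
  obtain ⟨k, hk⟩ := Nat.exists_eq_add_of_lt hp0
  have h1 : t₁ + d + 1 - t₁ = d + 1 := by omega
  have h2 : p - 1 = k := by omega
  rw [h1, h2, hk]
  ring

end Core

section Jumps

variable {F B : Type*} [Field F] [NormedField B] [Algebra F B] {q : ℝ}

/-- Every automorphism over `K` that moves the uniformizers of `K'` does so by exactly `t + 1`
in the normalized valuation of `K'`. -/
def IsJump (q : ℝ) (K K' : IntermediateField F B) (t : ℕ) : Prop :=
  ∀ g : B ≃ₐ[F] B, (∀ z ∈ K, g z = z) → ∀ y, IsUnif q K' y → g y ≠ y →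
    ‖g y - y‖ = ‖y‖ ^ (t + 1)

theorem IsUnif.norm_eq {K : IntermediateField F B} {y y' : B} (hy : IsUnif q K y)
    (hy' : IsUnif q K y') : ‖y‖ = ‖y'‖ :=
  (pow_left_inj₀ (norm_nonneg _) (norm_nonneg _) hy.2.1.ne').1 (hy.2.2.trans hy'.2.2.symm)

variable [IsUltrametricDist B]

theorem IsUnif.map_eq_self (hB : DiscreteBase F B q) {K : IntermediateField F B} {y : B}
    (hy : IsUnif q K y) {g : B ≃ₐ[F] B} (hg : g y = y) {z : B} (hz : z ∈ K) : g z = z := by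
  have key (w : B) (hw : w ∈ K) (hw1 : ‖w‖ ≤ 1) : g w = w := by
    have := norm_map_sub_le hB hy g hw hw1
    rw [hg, sub_self, norm_zero] at this
    exact sub_eq_zero.1 (norm_le_zero_iff.1 this)
  rcases le_total ‖z‖ 1 with h | h
  · exact key z hz h
  · have := key z⁻¹ (inv_mem hz) (by rw [norm_inv]; exact inv_le_one_of_one_le₀ h)
    simpa using this

theorem isJump_of_isUnif (hB : DiscreteBase F B q) {K K' : IntermediateField F B} {y : B} {t : ℕ}
    (hy : IsUnif q K' y)
    (h : ∀ g : B ≃ₐ[F] B, (∀ z ∈ K, g z = z) → g y ≠ y → ‖g y - y‖ = ‖y‖ ^ (t + 1)) :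
    IsJump q K K' t := by
  intro g hg y' hy' hgy'
  have e : ‖g y' - y'‖ = ‖g y - y‖ :=
    le_antisymm (norm_map_sub_le hB hy g hy'.1 (hy'.norm_lt_one hB.lt_one).le)
      (norm_map_sub_le hB hy' g hy.1 (hy.norm_lt_one hB.lt_one).le)
  rw [e, hy'.norm_eq hy]
  exact h g hg fun hgy ↦ hgy' (hy.map_eq_self hB hgy hy'.1)

omit [IsUltrametricDist B] in
theorem exists_algEquiv_ne [IsGalois F B] {K M : IntermediateField F B} (h : ¬M ≤ K) :
    ∃ g : B ≃ₐ[F] B, (∀ z ∈ K, g z = z) ∧ ∃ z ∈ M, g z ≠ z := by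
  by_contra! H
  apply h
  intro z hz
  rw [← InfiniteGalois.fixedField_fixingSubgroup K, IntermediateField.mem_fixedField_iff]
  intro g hg
  exact H g ((IntermediateField.mem_fixingSubgroup_iff K g).1 hg) z hz

omit [IsUltrametricDist B] in
theorem div_pow_eq_one {p : ℕ} {K : IntermediateField F B} {b : B} (hb : b ≠ 0)
    (hbK : b ^ p ∈ K) {g : B ≃ₐ[F] B} (hg : ∀ z ∈ K, g z = z) : (g b / b) ^ p = 1 := by
  rw [div_pow, ← map_pow, hg _ hbK, div_self (pow_ne_zero p hb)]

/-- The jumps of the upper steps of a square of Kummer extensions. -/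
theorem isJump_square [IsGalois F B] {p : ℕ} [hp : Fact p.Prime] (hB : DiscreteBase F B q)
    {b₁ b₂ : B} {K K₁ K₂ M : IntermediateField F B} (hM : M = IntermediateField.adjoin F {b₁, b₂})
    (hKK₁ : K ≤ K₁) (hKK₂ : K ≤ K₂) (hK₁ : K₁ ≤ M) (hK₂ : K₂ ≤ M)
    (hd₁ : Module.finrank F K₁ * p = Module.finrank F M)
    (hd₂ : Module.finrank F K₂ * p = Module.finrank F M)
    (hb₁ : b₁ ∈ K₁) (hb₂ : b₂ ∈ K₂) (hb₁0 : b₁ ≠ 0) (hb₂0 : b₂ ≠ 0)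
    (hb₁p : b₁ ^ p ∈ K) (hb₂p : b₂ ^ p ∈ K) (hμ : ∀ ω : B, ω ^ p = 1 → ω ∈ K)
    {y₁ y₂ : B} (hy₁ : IsUnif q K₁ y₁) (hy₂ : IsUnif q K₂ y₂) {t₁ t₂ : ℕ} (ht : t₁ < t₂)
    (ht₁ : IsJump q K K₁ t₁) (ht₂ : IsJump q K K₂ t₂) :
    IsJump q K₂ M t₁ ∧ IsJump q K₁ M (t₁ + p * (t₂ - t₁)) := by
  have hfix {g : B ≃ₐ[F] B} (h₁ : g b₁ = b₁) (h₂ : g b₂ = b₂) (z : B) (hz : z ∈ M) : g z = z := by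
    rw [hM] at hz
    refine eq_on_adjoin (g := (g : B →ₐ[F] B)) (h := AlgHom.id F B) ?_ hz
    rintro b (rfl | rfl)
    exacts [h₁, h₂]
  have main {σ τ : B ≃ₐ[F] B} (hσ : ∀ z ∈ K₂, σ z = z) (hτ : ∀ z ∈ K₁, τ z = z)
      (hσM : ∃ z ∈ M, σ z ≠ z) (hτM : ∃ z ∈ M, τ z ≠ z) {x : B} (hx : IsUnif q M x) :
      ‖σ x - x‖ = ‖x‖ ^ (t₁ + 1) ∧ ‖τ x - x‖ = ‖x‖ ^ (t₁ + p * (t₂ - t₁) + 1) := by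
    have hσK : ∀ z ∈ K, σ z = z := fun z hz ↦ hσ z (hKK₂ hz)
    have hτK : ∀ z ∈ K, τ z = z := fun z hz ↦ hτ z (hKK₁ hz)
    have hω₁ := div_pow_eq_one hb₁0 hb₁p hσK
    have hω₂ := div_pow_eq_one hb₂0 hb₂p hτK
    refine square_norm_sub hB hM hK₁ hK₂ hd₁ hd₂ hx hy₁ hy₂ (hK₁ (hKK₁ (hμ _ hω₁)))
      (hK₁ (hKK₁ (hμ _ hω₂))) hω₁ hω₂ hσ hτ (div_mul_cancel₀ _ hb₁0).symm (hσ _ hb₂) (hτ _ hb₁)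
      (div_mul_cancel₀ _ hb₂0).symm (hσK _ (hμ _ hω₁)) (hσK _ (hμ _ hω₂)) (hτK _ (hμ _ hω₁))
      (hτK _ (hμ _ hω₂)) ht (ht₁ σ hσK y₁ hy₁ fun h ↦ ?_) (ht₂ τ hτK y₂ hy₂ fun h ↦ ?_)
    · obtain ⟨z, hz, hne⟩ := hσM
      exact hne (hfix (hy₁.map_eq_self hB h hb₁) (hσ _ hb₂) z hz)
    · obtain ⟨z, hz, hne⟩ := hτM
      exact hne (hfix (hτ _ hb₁) (hy₂.map_eq_self hB h hb₂) z hz)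
  have hlt {K' : IntermediateField F B} {y : B} (hy : IsUnif q K' y) (hK' : K' ≤ M)
      (hd : Module.finrank F K' * p = Module.finrank F M) : ¬M ≤ K' := by
    intro h
    have e : K' = M := le_antisymm hK' h
    rw [← e] at hd
    exact hp.out.ne_one (Nat.eq_of_mul_eq_mul_left hy.2.1 (hd.trans (mul_one _).symm))
  obtain ⟨σ, hσ, hσM⟩ := exists_algEquiv_ne (hlt hy₂ hK₂ hd₂)
  obtain ⟨τ, hτ, hτM⟩ := exists_algEquiv_ne (hlt hy₁ hK₁ hd₁)
  exact ⟨fun g hg x hx hgx ↦ (main hg hτ ⟨x, hx.1, hgx⟩ hτM hx).1,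
    fun g hg x hx hgx ↦ (main hσ hg hσM ⟨x, hx.1, hgx⟩ hx).2⟩

/-- The distance from `1` of primitive roots of unity of order a prime power. -/
theorem norm_primitiveRoot_sub_one {p : ℕ} [hp : Fact p.Prime] {k : ℕ} {ζ : B}
    (hζ : IsPrimitiveRoot ζ (p ^ (k + 1))) : ‖ζ - 1‖ ^ ((p - 1) * p ^ k) = ‖(p : B)‖ := by
  have hn : p ^ (k + 1) ≠ 0 := (pow_pos hp.out.pos _).ne'
  have hle {a b : B} (ha : IsPrimitiveRoot a (p ^ (k + 1)))
      (hb : IsPrimitiveRoot b (p ^ (k + 1))) : ‖b - 1‖ ≤ ‖a - 1‖ := by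
    have : NeZero (p ^ (k + 1)) := ⟨hn⟩
    obtain ⟨i, -, rfl⟩ := ha.eq_pow_of_pow_eq_one hb.pow_eq_one
    have ha1 : ‖a‖ = 1 := (pow_eq_one_iff_of_nonneg (norm_nonneg a) hn).1
      (by rw [← norm_pow, ha.pow_eq_one, norm_one])
    simpa using norm_pow_sub_pow_le ha1.le norm_one.le i
  have h1 := Polynomial.eval_one_cyclotomic_prime_pow (R := B) (p := p) k
  rw [Polynomial.cyclotomic_eq_prod_X_sub_primitiveRoots hζ, Polynomial.eval_prod] at h1
  rw [← h1, norm_prod, Finset.prod_congr rfl (g := fun _ ↦ ‖ζ - 1‖), Finset.prod_const,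
    hζ.card_primitiveRoots, Nat.totient_prime_pow_succ hp.out, mul_comm]
  intro μ hμ
  have hμ := isPrimitiveRoot_of_mem_primitiveRoots hμ
  simp only [Polynomial.eval_sub, Polynomial.eval_X, Polynomial.eval_C]
  rw [norm_sub_rev]
  exact le_antisymm (hle hζ hμ) (hle hμ hζ)

end Jumps

/-- A grid of totally ramified Kummer extensions of `F`, generated by compatible systems of
roots of unity and of roots of an element of valuation prime to `p`. -/
structure KummerGrid (F : Type*) {B : Type*} [Field F] [NormedField B] [Algebra F B] (p v : ℕ)
    (ζ α : ℕ → B) : Prop where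
  base : DiscreteBase F B ‖(p : B)‖
  primitive : ∀ r, IsPrimitiveRoot (ζ r) (p ^ r)
  zeta_pow : ∀ r, ζ (r + 1) ^ p = ζ r
  alpha_pow : ∀ s, α (s + 1) ^ p = α s
  norm_alpha : ‖α 0‖ = ‖(p : B)‖ ^ v
  not_dvd : ¬p ∣ v
  finrank : ∀ r s, 1 ≤ r →
    Module.finrank F (IntermediateField.adjoin F {ζ r, α s}) = (p - 1) * p ^ (r - 1 + s)
  unif : ∀ r s, 1 ≤ r → ∃ y, IsUnif ‖(p : B)‖ (IntermediateField.adjoin F {ζ r, α s}) y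

namespace KummerGrid

open IntermediateField

variable {F B : Type*} [Field F] [NormedField B] [Algebra F B] {p v : ℕ} {ζ α : ℕ → B}

theorem norm_zeta (h : KummerGrid F p v ζ α) [hp : Fact p.Prime] (r : ℕ) : ‖ζ r‖ = 1 :=
  (pow_eq_one_iff_of_nonneg (norm_nonneg _) (pow_pos hp.out.pos r).ne').1
    (by rw [← norm_pow, (h.primitive r).pow_eq_one, norm_one])

theorem zeta_ne_zero (h : KummerGrid F p v ζ α) [hp : Fact p.Prime] (r : ℕ) : ζ r ≠ 0 :=
  norm_pos_iff.1 (by rw [h.norm_zeta]; exact one_pos)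

theorem norm_alpha_pow (h : KummerGrid F p v ζ α) (s : ℕ) :
    ‖α s‖ ^ p ^ s = ‖(p : B)‖ ^ v := by
  induction s with
  | zero => simpa using h.norm_alpha
  | succ s ih => rw [pow_succ', pow_mul, ← norm_pow, h.alpha_pow, ih]

theorem norm_alpha_pos (h : KummerGrid F p v ζ α) [hp : Fact p.Prime] (s : ℕ) : 0 < ‖α s‖ := by
  refine (norm_nonneg _).lt_of_ne fun h0 ↦ ?_
  have := h.norm_alpha_pow s
  rw [← h0, zero_pow (pow_pos hp.out.pos s).ne'] at this
  exact (pow_pos h.base.pos v).ne this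

theorem alpha_ne_zero (h : KummerGrid F p v ζ α) [hp : Fact p.Prime] (s : ℕ) : α s ≠ 0 :=
  norm_pos_iff.1 (h.norm_alpha_pos s)

theorem zeta_mem (r s : ℕ) : ζ r ∈ adjoin F {ζ r, α s} := subset_adjoin F _ (by simp)

theorem alpha_mem (r s : ℕ) : α s ∈ adjoin F {ζ r, α s} := subset_adjoin F _ (by simp)

theorem le_succ_left (h : KummerGrid F p v ζ α) (r s : ℕ) :
    adjoin F {ζ r, α s} ≤ adjoin F {ζ (r + 1), α s} := by
  rw [adjoin_le_iff]
  rintro b (rfl | rfl)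
  · rw [← h.zeta_pow r]
    exact pow_mem (zeta_mem _ _) p
  · exact alpha_mem _ _

theorem le_succ_right (h : KummerGrid F p v ζ α) (r s : ℕ) :
    adjoin F {ζ r, α s} ≤ adjoin F {ζ r, α (s + 1)} := by
  rw [adjoin_le_iff]
  rintro b (rfl | rfl)
  · exact zeta_mem _ _
  · rw [← h.alpha_pow s]
    exact pow_mem (alpha_mem _ _) p

theorem zeta_one_mem (h : KummerGrid F p v ζ α) {r : ℕ} (hr : 1 ≤ r) (s : ℕ) :
    ζ 1 ∈ adjoin F {ζ r, α s} := by
  induction r, hr using Nat.le_induction with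
  | base => exact zeta_mem _ _
  | succ r _ ih => exact h.le_succ_left r s ih

theorem mem_of_pow_eq_one (h : KummerGrid F p v ζ α) [hp : Fact p.Prime] {r : ℕ} (hr : 1 ≤ r)
    (s : ℕ) {ω : B} (hω : ω ^ p = 1) : ω ∈ adjoin F {ζ r, α s} := by
  have : NeZero p := ⟨hp.out.ne_zero⟩
  have hζ := h.primitive 1
  rw [pow_one] at hζ
  obtain ⟨i, -, rfl⟩ := hζ.eq_pow_of_pow_eq_one hω
  exact pow_mem (h.zeta_one_mem hr s) i

theorem finrank_succ_left (h : KummerGrid F p v ζ α) {r : ℕ} (hr : 1 ≤ r) (s : ℕ) :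
    Module.finrank F (adjoin F {ζ r, α s}) * p =
      Module.finrank F (adjoin F {ζ (r + 1), α s}) := by
  rw [h.finrank r s hr, h.finrank (r + 1) s (by omega), mul_assoc, ← pow_succ]
  congr 2
  omega

theorem finrank_succ_right (h : KummerGrid F p v ζ α) {r : ℕ} (hr : 1 ≤ r) (s : ℕ) :
    Module.finrank F (adjoin F {ζ r, α s}) * p =
      Module.finrank F (adjoin F {ζ r, α (s + 1)}) := by
  rw [h.finrank r s hr, h.finrank r (s + 1) hr, mul_assoc, ← pow_succ]
  congr 2

/-- Jump of the step from level `(r, s)` to level `(r + 1, s)`. -/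
def HorJump (F : Type*) {B : Type*} [Field F] [NormedField B] [Algebra F B] (p : ℕ)
    (ζ α : ℕ → B) (r s t : ℕ) : Prop :=
  IsJump ‖(p : B)‖ (adjoin F {ζ r, α s}) (adjoin F {ζ (r + 1), α s}) t

/-- Jump of the step from level `(r, s)` to level `(r, s + 1)`. -/
def VerJump (F : Type*) {B : Type*} [Field F] [NormedField B] [Algebra F B] (p : ℕ)
    (ζ α : ℕ → B) (r s t : ℕ) : Prop :=
  IsJump ‖(p : B)‖ (adjoin F {ζ r, α s}) (adjoin F {ζ r, α (s + 1)}) t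

section

variable [IsUltrametricDist B] [IsGalois F B] [hp : Fact p.Prime]

theorem jumps_of_lt (h : KummerGrid F p v ζ α) {r s t₁ t₂ : ℕ} (hr : 1 ≤ r) (ht : t₁ < t₂)
    (h₁ : HorJump F p ζ α r s t₁) (h₂ : VerJump F p ζ α r s t₂) :
    HorJump F p ζ α r (s + 1) t₁ ∧ VerJump F p ζ α (r + 1) s (t₁ + p * (t₂ - t₁)) := by
  obtain ⟨y₁, hy₁⟩ := h.unif (r + 1) s (by omega)
  obtain ⟨y₂, hy₂⟩ := h.unif r (s + 1) hr
  exact isJump_square h.base rfl (h.le_succ_left r s) (h.le_succ_right r s)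
    (h.le_succ_right (r + 1) s) (h.le_succ_left r (s + 1))
    (h.finrank_succ_right (by omega) s) (h.finrank_succ_left hr (s + 1)) (zeta_mem _ _)
    (alpha_mem _ _) (h.zeta_ne_zero _) (h.alpha_ne_zero _) (by rw [h.zeta_pow]; exact zeta_mem _ _)
    (by rw [h.alpha_pow]; exact alpha_mem _ _) (fun ω hω ↦ h.mem_of_pow_eq_one hr s hω) hy₁ hy₂
    ht h₁ h₂

theorem jumps_of_gt (h : KummerGrid F p v ζ α) {r s t₁ t₂ : ℕ} (hr : 1 ≤ r) (ht : t₂ < t₁)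
    (h₁ : HorJump F p ζ α r s t₁) (h₂ : VerJump F p ζ α r s t₂) :
    HorJump F p ζ α r (s + 1) (t₂ + p * (t₁ - t₂)) ∧ VerJump F p ζ α (r + 1) s t₂ := by
  obtain ⟨y₁, hy₁⟩ := h.unif (r + 1) s (by omega)
  obtain ⟨y₂, hy₂⟩ := h.unif r (s + 1) hr
  exact (isJump_square h.base (congrArg (adjoin F) (Set.pair_comm _ _)) (h.le_succ_right r s)
    (h.le_succ_left r s) (h.le_succ_left r (s + 1)) (h.le_succ_right (r + 1) s)
    (h.finrank_succ_left hr (s + 1)) (h.finrank_succ_right (by omega) s)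
    (alpha_mem _ _) (zeta_mem _ _) (h.alpha_ne_zero _) (h.zeta_ne_zero _)
    (by rw [h.alpha_pow]; exact alpha_mem _ _) (by rw [h.zeta_pow]; exact zeta_mem _ _)
    (fun ω hω ↦ h.mem_of_pow_eq_one hr s hω) hy₂ hy₁ ht h₂ h₁).symm

omit [IsGalois F B] in
theorem norm_sub_one_of_pow_eq_one {ω : B} (hω : ω ^ p = 1) (hω1 : ω ≠ 1) :
    ‖ω - 1‖ ^ (p - 1) = ‖(p : B)‖ := by
  have h1 : IsPrimitiveRoot ω (p ^ (0 + 1)) := by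
    rw [zero_add, pow_one, ← orderOf_eq_prime hω hω1]
    exact IsPrimitiveRoot.orderOf ω
  simpa using norm_primitiveRoot_sub_one h1

omit [IsGalois F B] in
theorem norm_sub_one_eq {K : IntermediateField F B} {x ω : B} {m : ℕ}
    (hx : IsUnif ‖(p : B)‖ K x) (hK : Module.finrank F K = (p - 1) * m) (hω : ω ^ p = 1)
    (hω1 : ω ≠ 1) : ‖ω - 1‖ = ‖x‖ ^ m := by
  refine (pow_left_inj₀ (norm_nonneg _) (by positivity) ?_).1
    ((norm_sub_one_of_pow_eq_one hω hω1).trans ?_)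
  · exact (Nat.sub_pos_of_lt hp.out.one_lt).ne'
  · rw [← pow_mul, mul_comm, ← hK, hx.2.2]

omit [IsGalois F B] in
theorem horJump_zero (h : KummerGrid F p v ζ α) {r : ℕ} (hr : 1 ≤ r) :
    HorJump F p ζ α r 0 (p ^ r - 1) := by
  have hfin : Module.finrank F (adjoin F {ζ (r + 1), α 0}) = (p - 1) * p ^ r := by
    simpa using h.finrank (r + 1) 0 (by omega)
  have hpr := pow_pos hp.out.pos r
  have hy : IsUnif ‖(p : B)‖ (adjoin F {ζ (r + 1), α 0}) (ζ (r + 1) - 1) := by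
    refine ⟨sub_mem (zeta_mem _ _) (one_mem _), ?_, ?_⟩
    · rw [hfin]
      exact Nat.mul_pos (Nat.sub_pos_of_lt hp.out.one_lt) hpr
    · rw [hfin]
      exact norm_primitiveRoot_sub_one (h.primitive (r + 1))
  refine isJump_of_isUnif h.base hy fun g hg hgy ↦ ?_
  have hζ0 := h.zeta_ne_zero (r + 1)
  have hω := div_pow_eq_one hζ0 (by rw [h.zeta_pow]; exact zeta_mem r 0) hg
  have hω1 : g (ζ (r + 1)) / ζ (r + 1) ≠ 1 := fun h1 ↦ hgy (by
    rw [map_sub, map_one, (div_eq_one_iff_eq hζ0).1 h1])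
  rw [Nat.sub_add_cancel hpr, ← norm_sub_one_eq hy hfin hω hω1, map_sub, map_one,
    sub_sub_sub_cancel_right, div_sub_one hζ0, norm_div, h.norm_zeta, div_one]

omit [IsGalois F B] in
theorem verJump_one (h : KummerGrid F p v ζ α) (s : ℕ) : VerJump F p ζ α 1 s (p ^ (s + 1)) := by
  have hfin : Module.finrank F (adjoin F {ζ 1, α (s + 1)}) = (p - 1) * p ^ (s + 1) := by
    simpa using h.finrank 1 (s + 1) le_rfl
  have hp1 : 0 < p - 1 := Nat.sub_pos_of_lt hp.out.one_lt
  have hcop : Nat.Coprime (v * (p - 1)) (p ^ (s + 1)) := by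
    refine Nat.Coprime.pow_right _ (Nat.Coprime.symm ((Nat.Prime.coprime_iff_not_dvd hp.out).2 ?_))
    rw [hp.out.dvd_mul]
    rintro (h1 | h1)
    · exact h.not_dvd h1
    · exact absurd (Nat.le_of_dvd hp1 h1) (by omega)
  obtain ⟨i, j, hij⟩ :
      ∃ i j : ℤ, ((v * (p - 1) : ℕ) : ℤ) * i + ((p ^ (s + 1) : ℕ) : ℤ) * j = 1 := by
    have := Nat.gcd_eq_gcd_ab (v * (p - 1)) (p ^ (s + 1))
    rw [hcop] at this
    exact ⟨_, _, this.symm⟩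
  have hq := h.base.pos
  have hα : ‖α (s + 1)‖ ^ ((p - 1) * p ^ (s + 1)) = ‖(p : B)‖ ^ (v * (p - 1)) := by
    rw [mul_comm, pow_mul, h.norm_alpha_pow, ← pow_mul]
  have hζ : ‖ζ 1 - 1‖ ^ ((p - 1) * p ^ (s + 1)) = ‖(p : B)‖ ^ p ^ (s + 1) := by
    rw [pow_mul]
    congr 1
    simpa using norm_primitiveRoot_sub_one (k := 0) (h.primitive 1)
  set x := α (s + 1) ^ i * (ζ 1 - 1) ^ j with hxdef
  have hx : IsUnif ‖(p : B)‖ (adjoin F {ζ 1, α (s + 1)}) x := by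
    refine ⟨mul_mem (zpow_mem (alpha_mem _ _) i)
      (zpow_mem (sub_mem (zeta_mem _ _) (one_mem _)) j), ?_, ?_⟩
    · rw [hfin]
      exact Nat.mul_pos hp1 (pow_pos hp.out.pos _)
    · rw [hfin, hxdef, norm_mul, mul_pow, norm_zpow, norm_zpow, ← zpow_natCast, ← zpow_natCast,
        zpow_comm, zpow_comm ‖ζ 1 - 1‖, zpow_natCast, zpow_natCast, hα, hζ, ← zpow_natCast,
        ← zpow_natCast, ← zpow_mul, ← zpow_mul, ← zpow_add₀ hq.ne', hij, zpow_one]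
  refine isJump_of_isUnif h.base hx fun g hg hgx ↦ ?_
  have hα0 := h.alpha_ne_zero (s + 1)
  have hω := div_pow_eq_one hα0 (by rw [h.alpha_pow]; exact alpha_mem 1 s) hg
  have e : g x = (g (α (s + 1)) / α (s + 1)) ^ i * x := by
    rw [hxdef, map_mul, map_zpow₀, map_zpow₀, map_sub, map_one, hg _ (zeta_mem 1 s), ← mul_assoc,
      ← mul_zpow, div_mul_cancel₀ _ hα0]
  have hωi : ((g (α (s + 1)) / α (s + 1)) ^ i) ^ p = 1 := by
    rw [← zpow_natCast, zpow_comm, zpow_natCast, hω, one_zpow]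
  have hωi1 : (g (α (s + 1)) / α (s + 1)) ^ i ≠ 1 := fun h1 ↦ hgx (by rw [e, h1, one_mul])
  rw [pow_succ, ← norm_sub_one_eq hx hfin hωi hωi1, e, ← norm_mul, sub_one_mul]

end

end KummerGrid

namespace KummerGrid

/-- The equations determining the jump `t` from level `(k + 1, s)` to level `(k + 2, s)`. -/
def HorValue (p k s t : ℕ) : Prop :=
  (s ≤ k → (p + 1) * t + 2 * p ^ (2 * s + 1) + 1 = (p + 1) * p ^ (k + 1 + s) + p) ∧
  (k ≤ s → (p + 1) * t + p ^ (2 * k + 1) + 1 = p ^ (2 * k + 2) + p)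

/-- The equations determining the jump `t` from level `(k + 1, s)` to level `(k + 1, s + 1)`. -/
def VerValue (p k s t : ℕ) : Prop :=
  (k ≤ s + 1 → (p + 1) * t + p ^ (2 * k + 1) + 1 = (p + 1) * p ^ (s + k + 1) + p ^ (2 * k) + p) ∧
  (s + 1 ≤ k → (p + 1) * t + 1 = 2 * p ^ (2 * s + 2) + p)

theorem horValue_zero {p : ℕ} (hp : 0 < p) (k : ℕ) : HorValue p k 0 (p ^ (k + 1) - 1) := by
  obtain ⟨n, hn⟩ := Nat.exists_eq_add_of_lt (pow_pos hp (k + 1))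
  rw [zero_add] at hn
  refine ⟨fun _ ↦ ?_, fun hk ↦ ?_⟩
  · rw [add_zero, hn, Nat.add_sub_cancel]
    ring
  · obtain rfl : k = 0 := by omega
    simp only [zero_add, pow_one, mul_zero] at hn ⊢
    subst hn
    rw [Nat.add_sub_cancel]
    ring

theorem verValue_zero (p s : ℕ) : VerValue p 0 s (p ^ (s + 1)) := by
  refine ⟨fun _ ↦ ?_, fun h ↦ by omega⟩
  ring

theorem lt_of_values_of_le {p k s h v : ℕ} (hp : 3 ≤ p) (hk : k ≤ s) (hh : HorValue p k s h)
    (hv : VerValue p k s v) : h < v := by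
  have e₁ := hh.2 hk
  have e₂ := hv.1 (by omega)
  have h1 : p ^ (2 * k + 1) ≤ p ^ (s + k + 1) := Nat.pow_le_pow_right (by omega) (by omega)
  have h2 : 0 < p ^ (2 * k) := pow_pos (by omega) _
  have h3 : p ^ (2 * k + 2) = p * p ^ (2 * k + 1) := by ring
  have h4 := Nat.mul_le_mul_left (p + 1) h1
  by_contra! hlt
  have h5 := Nat.mul_le_mul_left (p + 1) hlt
  have h6 := Nat.zero_le (p ^ (2 * k + 1))
  linarith

theorem lt_of_values_of_lt {p k s h v : ℕ} (hp : 3 ≤ p) (hk : s + 1 ≤ k) (hh : HorValue p k s h)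
    (hv : VerValue p k s v) : v < h := by
  have e₁ := hh.1 (by omega)
  have e₂ := hv.2 hk
  have h1 : p ^ (2 * s + 2) ≤ p ^ (k + 1 + s) := Nat.pow_le_pow_right (by omega) (by omega)
  have h2 : 0 < p ^ (2 * s + 1) := pow_pos (by omega) _
  have h3 : p ^ (2 * s + 2) = p * p ^ (2 * s + 1) := by ring
  have h4 := Nat.mul_le_mul_left (p + 1) h1
  have h5 := Nat.mul_le_mul_right ((p + 1) * p ^ (2 * s + 1)) hp
  have h6 : 0 < (p + 1) * p ^ (2 * s + 1) := by positivity
  by_contra! hlt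
  have h7 := Nat.mul_le_mul_left (p + 1) hlt
  rw [h3] at h4 e₂
  linarith

theorem values_of_le {p k s h d : ℕ} (hk : k ≤ s) (hh : HorValue p k s h)
    (hv : VerValue p k s (h + d)) :
    HorValue p k (s + 1) h ∧ VerValue p (k + 1) s (h + p * d) := by
  have e₁ := hh.2 hk
  have e₂ := hv.1 (by omega)
  have key : (p + 1) * (h + p * d) + p ^ (2 * (k + 1) + 1) + 1 =
      (p + 1) * p ^ (s + (k + 1) + 1) + p ^ (2 * (k + 1)) + p := by
    zify at e₁ e₂ ⊢
    linear_combination (1 - (p : ℤ)) * e₁ + p * e₂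
  refine ⟨⟨fun h1 ↦ by omega, fun _ ↦ e₁⟩, fun _ ↦ key, fun h1 ↦ ?_⟩
  obtain rfl : k = s := by omega
  zify at key ⊢
  linear_combination key

theorem values_of_lt {p k s d v : ℕ} (hk : s + 1 ≤ k) (hh : HorValue p k s (v + d))
    (hv : VerValue p k s v) :
    HorValue p k (s + 1) (v + p * d) ∧ VerValue p (k + 1) s v := by
  have e₁ := hh.1 (by omega)
  have e₂ := hv.2 hk
  have key : (p + 1) * (v + p * d) + 2 * p ^ (2 * (s + 1) + 1) + 1 =
      (p + 1) * p ^ (k + 1 + (s + 1)) + p := by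
    zify at e₁ e₂ ⊢
    linear_combination (1 - (p : ℤ)) * e₂ + p * e₁
  refine ⟨⟨fun _ ↦ key, fun h1 ↦ ?_⟩, fun h1 ↦ by omega, fun _ ↦ e₂⟩
  obtain rfl : k = s + 1 := by omega
  zify at key ⊢
  linear_combination key

variable {F B : Type*} [Field F] [NormedField B] [Algebra F B] {p v : ℕ} {ζ α : ℕ → B}
  [IsUltrametricDist B] [IsGalois F B] [hp : Fact p.Prime]

/-- One square of the grid. -/
theorem exists_jumps_succ (h : KummerGrid F p v ζ α) (hp2 : p ≠ 2) {k s : ℕ}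
    (hh : ∃ t, HorJump F p ζ α (k + 1) s t ∧ HorValue p k s t)
    (hv : ∃ t, VerJump F p ζ α (k + 1) s t ∧ VerValue p k s t) :
    (∃ t, HorJump F p ζ α (k + 1) (s + 1) t ∧ HorValue p k (s + 1) t) ∧
      ∃ t, VerJump F p ζ α (k + 1 + 1) s t ∧ VerValue p (k + 1) s t := by
  have hp3 : 3 ≤ p := by have := hp.out.two_le; omega
  obtain ⟨t₁, h₁, e₁⟩ := hh
  obtain ⟨t₂, h₂, e₂⟩ := hv
  rcases Nat.lt_or_ge s k with hk | hk
  · have hlt := lt_of_values_of_lt hp3 hk e₁ e₂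
    obtain ⟨d, rfl⟩ := Nat.exists_eq_add_of_le hlt.le
    obtain ⟨j₁, j₂⟩ := h.jumps_of_gt (by omega) hlt h₁ h₂
    rw [Nat.add_sub_cancel_left] at j₁
    obtain ⟨e₁', e₂'⟩ := values_of_lt hk e₁ e₂
    exact ⟨⟨_, j₁, e₁'⟩, _, j₂, e₂'⟩
  · have hlt := lt_of_values_of_le hp3 hk e₁ e₂
    obtain ⟨d, rfl⟩ := Nat.exists_eq_add_of_le hlt.le
    obtain ⟨j₁, j₂⟩ := h.jumps_of_lt (by omega) hlt h₁ h₂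
    rw [Nat.add_sub_cancel_left] at j₂
    obtain ⟨e₁', e₂'⟩ := values_of_le hk e₁ e₂
    exact ⟨⟨_, j₁, e₁'⟩, _, j₂, e₂'⟩

theorem exists_verJump_of_horJump (h : KummerGrid F p v ζ α) (hp2 : p ≠ 2) {s : ℕ}
    (hh : ∀ k, ∃ t, HorJump F p ζ α (k + 1) s t ∧ HorValue p k s t) (k : ℕ) :
    ∃ t, VerJump F p ζ α (k + 1) s t ∧ VerValue p k s t := by
  induction k with
  | zero => exact ⟨_, h.verJump_one s, verValue_zero p s⟩
  | succ k ih => exact (h.exists_jumps_succ hp2 (hh k) ih).2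

theorem exists_horJump (h : KummerGrid F p v ζ α) (hp2 : p ≠ 2) (k s : ℕ) :
    ∃ t, HorJump F p ζ α (k + 1) s t ∧ HorValue p k s t := by
  induction s generalizing k with
  | zero => exact ⟨_, h.horJump_zero (by omega), horValue_zero hp.out.pos k⟩
  | succ s ih => exact (h.exists_jumps_succ hp2 (ih k) (h.exists_verJump_of_horJump hp2 ih k)).1

theorem exists_verJump (h : KummerGrid F p v ζ α) (hp2 : p ≠ 2) (k s : ℕ) :
    ∃ t, VerJump F p ζ α (k + 1) s t ∧ VerValue p k s t :=
  h.exists_verJump_of_horJump hp2 (fun k ↦ h.exists_horJump hp2 k s) k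

end KummerGrid

section LocalFields

open Polynomial in
theorem mem_ringOfInt_iff_spectralNorm {p : ℕ} [Fact p.Prime] {L : Type*} [Field L]
    [Algebra ℚ_[p] L] [Algebra.IsAlgebraic ℚ_[p] L] (x : L) :
    x ∈ ringOfInt p L ↔ spectralNorm ℚ_[p] L x ≤ 1 := by
  let := padicIntAlgebra p L
  have : IsScalarTower ℤ_[p] ℚ_[p] L := IsScalarTower.of_algebraMap_eq fun _ ↦ rfl
  have hx : IsIntegral ℚ_[p] x := Algebra.IsIntegral.isIntegral x
  change IsIntegral ℤ_[p] x ↔ _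
  rw [spectralNorm, spectralValue_le_one_iff (minpoly.monic hx)]
  constructor
  · intro h n
    rw [minpoly.isIntegrallyClosed_eq_field_fractions' ℚ_[p] h, coeff_map]
    exact PadicInt.norm_le_one _
  · intro h
    have hlift : minpoly ℚ_[p] x ∈ lifts (algebraMap ℤ_[p] ℚ_[p]) := by
      rw [lifts_iff_coeff_lifts]
      exact fun n ↦ ⟨⟨_, h n⟩, rfl⟩
    obtain ⟨P, hP, -, hmon⟩ := lifts_and_natDegree_eq_and_monic hlift (minpoly.monic hx)
    refine ⟨P, hmon, ?_⟩
    rw [IsScalarTower.algebraMap_eq ℤ_[p] ℚ_[p] L, ← eval₂_map, hP]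
    exact minpoly.aeval ℚ_[p] x

variable {p : ℕ} [hp : Fact p.Prime] {L B : Type*} [Field L] [Algebra ℚ_[p] L]
  [NormedField B] [Algebra ℚ_[p] B]

variable (hB : ∀ x : B, ‖x‖ = spectralNorm ℚ_[p] B x) (ψ : L →ₐ[ℚ_[p]] B)

include hB in
theorem spectralNorm_eq_norm (x : L) : spectralNorm ℚ_[p] L x = ‖ψ x‖ := by
  rw [hB, spectralNorm, spectralNorm, minpoly.algHom_eq ψ ψ.injective]

include hB in
theorem norm_natCast_prime : ‖(p : B)‖ = (p : ℝ)⁻¹ := by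
  rw [hB, ← map_natCast (algebraMap ℚ_[p] B), spectralNorm_extends, Padic.norm_p]

variable [Algebra.IsAlgebraic ℚ_[p] L]

include hB in
theorem mem_ringOfInt_iff (x : L) : x ∈ ringOfInt p L ↔ ‖ψ x‖ ≤ 1 := by
  rw [mem_ringOfInt_iff_spectralNorm, spectralNorm_eq_norm hB ψ]

include hB in
theorem isUnit_ringOfInt_iff (x : ringOfInt p L) : IsUnit x ↔ ‖ψ x‖ = 1 := by
  have hle (y : ringOfInt p L) : ‖ψ y‖ ≤ 1 := (mem_ringOfInt_iff hB ψ _).1 y.2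
  constructor
  · rintro h
    obtain ⟨y, hy⟩ := h.exists_right_inv
    have h1 : ‖ψ x‖ * ‖ψ y‖ = 1 := by
      rw [← norm_mul, ← map_mul, ← Subring.coe_mul, hy]
      simp
    refine (hle x).antisymm ?_
    rw [← h1]
    exact mul_le_of_le_one_right (norm_nonneg _) (hle y)
  · intro h
    have hx0 : (x : L) ≠ 0 := by
      intro h0
      rw [h0, map_zero, norm_zero] at h
      exact zero_ne_one h
    refine IsUnit.of_mul_eq_one (⟨(x : L)⁻¹, ?_⟩ : ringOfInt p L)
      (Subtype.ext (mul_inv_cancel₀ hx0))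
    rw [mem_ringOfInt_iff hB ψ, map_inv₀, norm_inv, h, inv_one]

variable [IsUltrametricDist B]

include hB ψ in
theorem isLocalRing_ringOfInt : IsLocalRing (ringOfInt p L) := by
  refine IsLocalRing.of_nonunits_add fun x y hx hy ↦ ?_
  have key (z : ringOfInt p L) : z ∈ nonunits (ringOfInt p L) ↔ ‖ψ z‖ < 1 := by
    rw [mem_nonunits_iff, isUnit_ringOfInt_iff hB ψ]
    exact ((mem_ringOfInt_iff hB ψ _).1 z.2).lt_iff_ne.symm
  rw [key] at hx hy ⊢
  rw [Subring.coe_add, map_add]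
  exact (IsUltrametricDist.norm_add_le_max _ _).trans_lt (max_lt hx hy)

include hB in
theorem mem_maxIdeal_iff (x : ringOfInt p L) : x ∈ maxIdeal p L ↔ ‖ψ x‖ < 1 := by
  have := isLocalRing_ringOfInt hB ψ
  rw [maxIdeal, IsLocalRing.jacobson_eq_maximalIdeal _ bot_ne_top, IsLocalRing.mem_maximalIdeal,
    mem_nonunits_iff, isUnit_ringOfInt_iff hB ψ]
  exact ((mem_ringOfInt_iff hB ψ _).1 x.2).lt_iff_ne.symm

/-- `ϖ` is a uniformizer of `L`. -/
def IsLocalUnif (ψ : L →ₐ[ℚ_[p]] B) (ϖ : L) : Prop :=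
  ϖ ≠ 0 ∧ ‖ψ ϖ‖ < 1 ∧ ∀ x, ‖ψ x‖ < 1 → ‖ψ x‖ ≤ ‖ψ ϖ‖

include hB in
theorem exists_isLocalUnif [FiniteDimensional ℚ_[p] L] : ∃ ϖ, IsLocalUnif ψ ϖ := by
  classical
  have hN : IsNoetherianRing (ringOfInt p L) := by
    let := padicIntAlgebra p L
    have : IsScalarTower ℤ_[p] ℚ_[p] L := IsScalarTower.of_algebraMap_eq fun _ ↦ rfl
    have := IsIntegralClosure.isNoetherianRing ℤ_[p] ℚ_[p] L (integralClosure ℤ_[p] L)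
    exact this
  obtain ⟨S, hS⟩ := hN.noetherian (maxIdeal p L)
  have hpn : ‖ψ (p : L)‖ = (p : ℝ)⁻¹ := by rw [map_natCast, norm_natCast_prime hB]
  have hp1 : ‖ψ (p : L)‖ < 1 := by
    rw [hpn]
    exact inv_lt_one_of_one_lt₀ (by exact_mod_cast hp.out.one_lt)
  have hp0 : 0 < ‖ψ (p : L)‖ := by
    rw [hpn]
    exact inv_pos.2 (by exact_mod_cast hp.out.pos)
  let T : Finset L := insert (p : L) (S.map ⟨_, Subtype.val_injective⟩)
  obtain ⟨ϖ, hϖ, hmax⟩ := T.exists_max_image (fun x ↦ ‖ψ x‖) ⟨_, Finset.mem_insert_self _ _⟩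
  have hpϖ : ‖ψ p‖ ≤ ‖ψ ϖ‖ := hmax _ (Finset.mem_insert_self _ _)
  refine ⟨ϖ, ?_, ?_, fun x hx ↦ ?_⟩
  · rintro rfl
    rw [map_zero, norm_zero] at hpϖ
    exact absurd hp0 (not_lt.2 hpϖ)
  · rcases Finset.mem_insert.1 hϖ with rfl | h
    · exact hp1
    · obtain ⟨y, hy, rfl⟩ := Finset.mem_map.1 h
      exact (mem_maxIdeal_iff hB ψ y).1 (hS ▸ Ideal.subset_span hy)
  · have hxm : (⟨x, (mem_ringOfInt_iff hB ψ x).2 hx.le⟩ : ringOfInt p L) ∈ Ideal.span S := by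
      rw [Ideal.span, hS]
      exact (mem_maxIdeal_iff hB ψ _).2 hx
    obtain ⟨c, hc⟩ := Submodule.mem_span_finset.1 hxm
    have hx' : x = ∑ s ∈ S, (c s : L) * s := by
      have := congrArg Subtype.val hc.2
      simpa using this.symm
    rw [hx', map_sum]
    refine IsUltrametricDist.norm_sum_le_of_forall_le_of_nonneg (norm_nonneg _) fun s hs ↦ ?_
    rw [map_mul, norm_mul]
    exact (mul_le_of_le_one_left (norm_nonneg _) ((mem_ringOfInt_iff hB ψ _).1 (c s).2)).trans
      (hmax _ (Finset.mem_insert_of_mem (Finset.mem_map_of_mem _ hs)))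

omit [Algebra.IsAlgebraic ℚ_[p] L] [IsUltrametricDist B] in
theorem IsLocalUnif.norm_pos {ψ : L →ₐ[ℚ_[p]] B} {ϖ : L} (h : IsLocalUnif ψ ϖ) : 0 < ‖ψ ϖ‖ :=
  norm_pos_iff.2 ((map_ne_zero ψ).2 h.1)

include hB in
theorem maxIdeal_pow_iff {ψ : L →ₐ[ℚ_[p]] B} {ϖ : L} (h : IsLocalUnif ψ ϖ) (n : ℕ)
    (x : ringOfInt p L) : x ∈ maxIdeal p L ^ n ↔ ‖ψ x‖ ≤ ‖ψ ϖ‖ ^ n := by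
  have hdvd (a b : ringOfInt p L) (ha : (a : L) ≠ 0) : a ∣ b ↔ ‖ψ b‖ ≤ ‖ψ a‖ := by
    have ha0 : 0 < ‖ψ a‖ := norm_pos_iff.2 ((map_ne_zero ψ).2 ha)
    constructor
    · rintro ⟨c, rfl⟩
      rw [Subring.coe_mul, map_mul, norm_mul]
      exact mul_le_of_le_one_right ha0.le ((mem_ringOfInt_iff hB ψ _).1 c.2)
    · intro hle
      refine ⟨⟨b / a, ?_⟩, Subtype.ext (mul_div_cancel₀ _ ha).symm⟩
      rw [mem_ringOfInt_iff hB ψ, map_div₀, norm_div]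
      exact div_le_one_of_le₀ hle ha0.le
  let w : ringOfInt p L := ⟨ϖ, (mem_ringOfInt_iff hB ψ _).2 h.2.1.le⟩
  have hspan : maxIdeal p L = Ideal.span {w} := by
    ext y
    rw [mem_maxIdeal_iff hB ψ, Ideal.mem_span_singleton, hdvd w y h.1]
    exact ⟨fun hy ↦ h.2.2 _ hy, fun hy ↦ hy.trans_lt h.2.1⟩
  rw [hspan, Ideal.span_singleton_pow, Ideal.mem_span_singleton,
    hdvd _ _ (by simpa [w] using pow_ne_zero n h.1)]
  simp [w]

omit [Algebra.IsAlgebraic ℚ_[p] L] [IsUltrametricDist B] in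
theorem IsLocalUnif.exists_zpow {ψ : L →ₐ[ℚ_[p]] B} {ϖ : L} (h : IsLocalUnif ψ ϖ) {x : L}
    (hx : x ≠ 0) : ∃ m : ℤ, ‖ψ x‖ = ‖ψ ϖ‖ ^ m := by
  have hx0 : 0 < ‖ψ x‖ := norm_pos_iff.2 ((map_ne_zero ψ).2 hx)
  have hpos := h.norm_pos
  obtain ⟨n, h1, h2⟩ := exists_mem_Ioc_zpow hx0 (one_lt_inv_iff₀.2 ⟨hpos, h.2.1⟩)
  have hy : ‖ψ (x * ϖ ^ (n + 1))‖ = ‖ψ x‖ * ‖ψ ϖ‖ ^ (n + 1) := by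
    rw [map_mul, norm_mul, map_zpow₀, norm_zpow]
  have hle : ‖ψ (x * ϖ ^ (n + 1))‖ ≤ 1 := by
    rw [hy, ← mul_inv_cancel₀ (zpow_pos hpos (n + 1)).ne', mul_comm]
    rw [inv_zpow] at h2
    exact mul_le_mul_of_nonneg_left h2 (zpow_pos hpos _).le
  have hlt : ‖ψ ϖ‖ < ‖ψ (x * ϖ ^ (n + 1))‖ := by
    rw [inv_zpow, inv_lt_iff_one_lt_mul₀ (zpow_pos hpos _)] at h1
    rw [hy, zpow_add_one₀ hpos.ne', ← mul_assoc]
    exact lt_mul_of_one_lt_left hpos h1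
  have hone : ‖ψ (x * ϖ ^ (n + 1))‖ = 1 :=
    hle.antisymm (not_lt.1 fun hlt1 ↦ (h.2.2 _ hlt1).not_gt hlt)
  rw [hy] at hone
  exact ⟨-(n + 1), by rw [zpow_neg]; exact eq_inv_of_mul_eq_one_left hone⟩

omit [Algebra.IsAlgebraic ℚ_[p] L] [IsUltrametricDist B] in
theorem IsLocalUnif.exists_pow {ψ : L →ₐ[ℚ_[p]] B} {ϖ : L} (h : IsLocalUnif ψ ϖ) {x : L}
    (hx : x ≠ 0) (hx1 : ‖ψ x‖ ≤ 1) : ∃ m : ℕ, ‖ψ x‖ = ‖ψ ϖ‖ ^ m := by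
  obtain ⟨m, hm⟩ := h.exists_zpow hx
  rw [hm, ← zpow_zero ‖ψ ϖ‖, zpow_le_zpow_iff_right_of_lt_one₀ h.norm_pos h.2.1] at hx1
  lift m to ℕ using hx1
  exact ⟨m, by rw [hm, zpow_natCast]⟩

include hB in
theorem norm_eq_pow_valInt {ψ : L →ₐ[ℚ_[p]] B} {ϖ : L} (h : IsLocalUnif ψ ϖ) {x : L}
    (hx : x ≠ 0) (hx1 : x ∈ ringOfInt p L) : ‖ψ x‖ = ‖ψ ϖ‖ ^ valInt p L x := by
  obtain ⟨m, hm⟩ := h.exists_pow hx ((mem_ringOfInt_iff hB ψ x).1 hx1)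
  have hset : {n : ℕ | ∃ y ∈ maxIdeal p L ^ n, (y : L) = x} = Set.Iic m := by
    ext n
    rw [Set.mem_Iic, ← pow_le_pow_iff_right_of_lt_one₀ h.norm_pos h.2.1, ← hm]
    constructor
    · rintro ⟨y, hy, rfl⟩
      exact (maxIdeal_pow_iff hB h n y).1 hy
    · exact fun hn ↦ ⟨⟨x, hx1⟩, (maxIdeal_pow_iff hB h n _).2 hn, rfl⟩
  rw [valInt, hset, csSup_Iic, hm]

omit [Algebra.IsAlgebraic ℚ_[p] L] in
theorem valInt_zero : valInt p L 0 = 0 := by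
  have : {n : ℕ | ∃ y ∈ maxIdeal p L ^ n, (y : L) = 0} = Set.univ :=
    Set.eq_univ_of_forall fun n ↦ ⟨0, zero_mem _, rfl⟩
  rw [valInt, this]
  exact Nat.sSup_of_not_bddAbove not_bddAbove_univ

include hB in
theorem norm_prime_eq_pow_eAbs {ψ : L →ₐ[ℚ_[p]] B} {ϖ : L} (h : IsLocalUnif ψ ϖ) :
    ‖(p : B)‖ = ‖ψ ϖ‖ ^ eAbs p L := by
  have hp1 : ‖ψ (p : L)‖ ≤ 1 := by
    rw [map_natCast, norm_natCast_prime hB]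
    exact inv_le_one_of_one_le₀ (by exact_mod_cast hp.out.one_le)
  have hp0 : (p : L) ≠ 0 := by
    intro h0
    have := norm_natCast_prime hB
    rw [← map_natCast ψ, h0, map_zero, norm_zero] at this
    exact inv_ne_zero (by exact_mod_cast hp.out.ne_zero) this.symm
  obtain ⟨m, hm⟩ := h.exists_pow hp0 hp1
  have hset : {n : ℕ | Ideal.span {(p : ringOfInt p L)} ≤ maxIdeal p L ^ n} = Set.Iic m := by
    ext n
    rw [Set.mem_Iic, ← pow_le_pow_iff_right_of_lt_one₀ h.norm_pos h.2.1, ← hm, Set.mem_ofPred_eq,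
      Ideal.span_singleton_le_iff_mem, maxIdeal_pow_iff hB h, Subring.coe_natCast]
  rw [eAbs, hset, csSup_Iic, ← hm, map_natCast]

include hB in
theorem isLocalUnif_prime (hunram : maxIdeal p L = Ideal.span {(p : ringOfInt p L)})
    (ψ : L →ₐ[ℚ_[p]] B) : IsLocalUnif ψ (p : L) := by
  have hpn : ‖ψ (p : L)‖ = (p : ℝ)⁻¹ := by rw [map_natCast, norm_natCast_prime hB]
  refine ⟨?_, ?_, fun x hx ↦ ?_⟩
  · intro h0
    rw [h0, map_zero, norm_zero] at hpn
    exact inv_ne_zero (by exact_mod_cast hp.out.ne_zero) hpn.symm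
  · rw [hpn]
    exact inv_lt_one_of_one_lt₀ (by exact_mod_cast hp.out.one_lt)
  · have hxm := (mem_maxIdeal_iff hB ψ ⟨x, (mem_ringOfInt_iff hB ψ x).2 hx.le⟩).2 hx
    rw [hunram, Ideal.mem_span_singleton] at hxm
    obtain ⟨c, hc⟩ := hxm
    have hc' : x = (p : L) * c := by simpa using congrArg Subtype.val hc
    rw [hc', map_mul, norm_mul]
    exact mul_le_of_le_one_right (norm_nonneg _) ((mem_ringOfInt_iff hB ψ _).1 c.2)

include hB in
theorem eAbs_eq_one (hunram : maxIdeal p L = Ideal.span {(p : ringOfInt p L)})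
    (ψ : L →ₐ[ℚ_[p]] B) : eAbs p L = 1 := by
  have h := isLocalUnif_prime hB hunram ψ
  have := norm_prime_eq_pow_eAbs hB h
  rw [← map_natCast ψ] at this
  exact (pow_right_injective₀ h.norm_pos h.2.1.ne (by simpa using this)).symm

end LocalFields

section Conversion

variable {F K L B : Type*} [Field F] [Field K] [Field L] [NormedField B] [Algebra F B]
  [Algebra F K] [Algebra F L] [Algebra K L] [IsScalarTower F K L] {ψ : L →ₐ[F] B}

omit [Field K] [Algebra F K] [Algebra K L] [IsScalarTower F K L] in
theorem exists_algEquiv_extending [Normal F B] (ψ : L →ₐ[F] B) (σ : L ≃ₐ[F] L) :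
    ∃ g : B ≃ₐ[F] B, ∀ x, g (ψ x) = ψ (σ x) := by
  let := ψ.toRingHom.toAlgebra
  have : IsScalarTower F L B := IsScalarTower.of_algebraMap_eq fun x ↦ (ψ.commutes x).symm
  exact ⟨σ.liftNormal B, fun x ↦ σ.liftNormal_commutes B x⟩

theorem exists_algEquiv_restricting [Algebra.IsAlgebraic F L] {g : B ≃ₐ[F] B}
    (hgK : ∀ k : K, g (ψ (algebraMap K L k)) = ψ (algebraMap K L k))
    (hgL : ∀ x, g (ψ x) ∈ ψ.fieldRange) : ∃ σ : L ≃ₐ[K] L, ∀ x, ψ (σ x) = g (ψ x) := by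
  choose τ hτ using hgL
  have hτ' (x) : ψ (τ x) = g (ψ x) := hτ x
  have hψ : Function.Injective ψ := ψ.injective
  have : Algebra.IsAlgebraic K L := Algebra.IsAlgebraic.tower_top (K := F) K
  let f : L →ₐ[K] L :=
    { toFun := τ
      map_one' := hψ (by simp [hτ'])
      map_mul' := fun x y ↦ hψ (by simp [hτ'])
      map_zero' := hψ (by simp [hτ'])
      map_add' := fun x y ↦ hψ (by simp [hτ'])
      commutes' := fun k ↦ hψ (by rw [hτ', hgK]) }
  exact ⟨AlgEquiv.ofBijective f (Algebra.IsAlgebraic.algHom_bijective f), hτ'⟩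

variable {p : ℕ} [hp : Fact p.Prime] [IsUltrametricDist B] [Algebra ℚ_[p] F] [Algebra ℚ_[p] L]
  [Algebra ℚ_[p] B] [IsScalarTower ℚ_[p] F L] [IsScalarTower ℚ_[p] F B]
  [Algebra.IsAlgebraic ℚ_[p] L] [Normal F B] {q : ℝ} {ϖ : L} {K₀ : IntermediateField F B} {t : ℕ}

theorem mem_ramSet_iff_of_isJump (hB : ∀ x : B, ‖x‖ = spectralNorm ℚ_[p] B x)
    (hF : DiscreteBase F B q) (hϖ : IsLocalUnif (ψ.restrictScalars ℚ_[p]) ϖ)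
    (hy : IsUnif q ψ.fieldRange (ψ ϖ)) (hK : ∀ z ∈ K₀, ∃ k : K, ψ (algebraMap K L k) = z)
    (hJ : IsJump q K₀ ψ.fieldRange t) (σ : L ≃ₐ[K] L) (i : ℕ) :
    σ ∈ ramSet p K L i ↔ σ = 1 ∨ i ≤ t := by
  obtain ⟨g, hg⟩ := exists_algEquiv_extending ψ (σ.restrictScalars F)
  replace hg (x) : ψ (σ x) = g (ψ x) := (hg x).symm
  have hgK (z) (hz : z ∈ K₀) : g z = z := by
    obtain ⟨k, rfl⟩ := hK z hz
    rw [← hg, σ.commutes]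
  have hmove (h1 : σ ≠ 1) : ‖g (ψ ϖ) - ψ ϖ‖ = ‖ψ ϖ‖ ^ (t + 1) := by
    refine hJ g hgK _ hy fun h ↦ h1 (AlgEquiv.ext fun x ↦ ψ.injective ?_)
    change ψ (σ x) = ψ x
    rw [hg]
    exact hy.map_eq_self hF h ⟨x, rfl⟩
  have hpos : 0 < ‖ψ ϖ‖ := hϖ.norm_pos
  have hlt : ‖ψ ϖ‖ < 1 := hϖ.2.1
  have hmem (x : L) : x ∈ ringOfInt p L ↔ ‖ψ x‖ ≤ 1 :=
    mem_ringOfInt_iff hB (ψ.restrictScalars ℚ_[p]) x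
  have hpow (n : ℕ) (x : ringOfInt p L) : x ∈ maxIdeal p L ^ n ↔ ‖ψ x‖ ≤ ‖ψ ϖ‖ ^ n :=
    maxIdeal_pow_iff hB hϖ n x
  constructor
  · intro h
    by_contra! hne
    obtain ⟨y, hy1, hy2⟩ := h ⟨ϖ, (hmem _).2 hlt.le⟩
    rw [hpow, hy2, map_sub, hg, hmove hne.1, pow_le_pow_iff_right_of_lt_one₀ hpos hlt] at hy1
    omega
  · intro h x
    have hle : ‖ψ (σ (x : L) - x)‖ ≤ ‖ψ ϖ‖ ^ (i + 1) := by
      rw [map_sub, hg]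
      by_cases h1 : σ = 1
      · rw [← hg, h1, AlgEquiv.one_apply, sub_self, norm_zero]
        positivity
      · refine (norm_map_sub_le hF hy g ⟨x, rfl⟩ ((hmem _).1 x.2)).trans ?_
        rw [hmove h1, pow_le_pow_iff_right_of_lt_one₀ hpos hlt]
        have := h.resolve_left h1
        omega
    exact ⟨⟨_, (hmem _).2 (hle.trans (pow_le_one₀ hpos.le hlt.le))⟩, (hpow _ _).2 hle, rfl⟩

theorem hasUniqueRamJump_of_isJump (hB : ∀ x : B, ‖x‖ = spectralNorm ℚ_[p] B x)
    (hF : DiscreteBase F B q) (hϖ : IsLocalUnif (ψ.restrictScalars ℚ_[p]) ϖ)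
    (hy : IsUnif q ψ.fieldRange (ψ ϖ)) (hK : ∀ z ∈ K₀, ∃ k : K, ψ (algebraMap K L k) = z)
    (hJ : IsJump q K₀ ψ.fieldRange t) (hσ : ∃ σ : L ≃ₐ[K] L, σ ≠ 1) :
    HasUniqueRamJump p K L t := by
  have key := mem_ramSet_iff_of_isJump (K := K) hB hF hϖ hy hK hJ
  obtain ⟨σ, h1⟩ := hσ
  refine ⟨fun h ↦ ?_, fun t' h ↦ ?_⟩
  · have := (Set.ext_iff.1 h σ).1 ((key σ t).2 (Or.inr le_rfl))
    rw [key] at this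
    exact this.elim h1 (by omega)
  · by_contra hne
    refine h (Set.ext fun τ ↦ ?_)
    rw [key, key]
    exact or_congr_right (by omega)

end Conversion

namespace KummerGrid

open IntermediateField

variable {F B : Type*} [Field F] [NormedField B] [Algebra F B] {p v : ℕ} {ζ α : ℕ → B}
  [IsGalois F B]

theorem exists_algEquiv_moving {K : IntermediateField F B} {b c : B} (hb : b ≠ 0)
    (hbp : b ^ p ∈ K) (hc : c ∈ K) (hroot : ∀ ω : B, ω ^ p = 1 → ω ∈ adjoin F {b, c})
    (hlt : Module.finrank F K < Module.finrank F (adjoin F {b, c}))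
    (hpos : 0 < Module.finrank F K) :
    ∃ g : B ≃ₐ[F] B, (∀ z ∈ K, g z = z) ∧ (∀ z ∈ adjoin F {b, c}, g z ∈ adjoin F {b, c}) ∧
      ∃ z ∈ adjoin F {b, c}, g z ≠ z := by
  have hle : ¬adjoin F {b, c} ≤ K := fun h ↦ by
    have : FiniteDimensional F K := FiniteDimensional.of_finrank_pos hpos
    exact (Submodule.finrank_mono (R := F) (s := (adjoin F {b, c}).toSubalgebra.toSubmodule)
      (t := K.toSubalgebra.toSubmodule) h).not_gt hlt
  obtain ⟨g, hg, hne⟩ := exists_algEquiv_ne hle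
  refine ⟨g, hg, fun z hz ↦ map_mem_adjoin (g := (g : B →ₐ[F] B)) ?_ hz, hne⟩
  rintro x (rfl | rfl)
  · have := mul_mem (hroot _ (div_pow_eq_one hb hbp hg))
      (subset_adjoin F {x, c} (Set.mem_insert x {c}))
    rwa [div_mul_cancel₀ _ hb] at this
  · have : g x = x := hg x hc
    simpa [this] using subset_adjoin F {b, x} (show x ∈ ({b, x} : Set B) by simp)

variable [hp : Fact p.Prime]

theorem exists_algEquiv_moving_left (h : KummerGrid F p v ζ α) {r : ℕ} (hr : 1 ≤ r) (s : ℕ) :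
    ∃ g : B ≃ₐ[F] B, (∀ z ∈ adjoin F {ζ r, α s}, g z = z) ∧
      (∀ z ∈ adjoin F {ζ (r + 1), α s}, g z ∈ adjoin F {ζ (r + 1), α s}) ∧
      ∃ z ∈ adjoin F {ζ (r + 1), α s}, g z ≠ z := by
  obtain ⟨y, hy⟩ := h.unif r s hr
  refine exists_algEquiv_moving (h.zeta_ne_zero _) ?_ (alpha_mem _ _)
    (fun ω ↦ h.mem_of_pow_eq_one (by omega) s) ?_ hy.2.1
  · rw [h.zeta_pow]
    exact zeta_mem _ _
  · rw [← h.finrank_succ_left hr]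
    exact lt_mul_of_one_lt_right hy.2.1 hp.out.one_lt

theorem exists_algEquiv_moving_right (h : KummerGrid F p v ζ α) {r : ℕ} (hr : 1 ≤ r) (s : ℕ) :
    ∃ g : B ≃ₐ[F] B, (∀ z ∈ adjoin F {ζ r, α s}, g z = z) ∧
      (∀ z ∈ adjoin F {ζ r, α (s + 1)}, g z ∈ adjoin F {ζ r, α (s + 1)}) ∧
      ∃ z ∈ adjoin F {ζ r, α (s + 1)}, g z ≠ z := by
  obtain ⟨y, hy⟩ := h.unif r s hr
  rw [Set.pair_comm (ζ r) (α (s + 1))]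
  refine exists_algEquiv_moving (h.alpha_ne_zero _) ?_ (zeta_mem _ _)
    (fun ω ↦ Set.pair_comm (ζ r) _ ▸ h.mem_of_pow_eq_one hr (s + 1)) ?_ hy.2.1
  · rw [h.alpha_pow]
    exact alpha_mem _ _
  · rw [Set.pair_comm (α (s + 1)), ← h.finrank_succ_right hr]
    exact lt_mul_of_one_lt_right hy.2.1 hp.out.one_lt

end KummerGrid

section Embedding

open IntermediateField

variable {F Ω B : Type*} [Field F] [Field Ω] [Algebra F Ω] [NormedField B] [Algebra F B]

theorem fieldRange_comp_inclusion {A L : IntermediateField F Ω} (φ : A →ₐ[F] B) {S : Set A}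
    (hL : L = adjoin F ((↑) '' S)) (h : L ≤ A) :
    (φ.comp (inclusion h)).fieldRange = adjoin F (φ '' S) := by
  subst hL
  apply le_antisymm
  · rintro _ ⟨⟨x, hx⟩, rfl⟩
    have hle : adjoin F ((↑) '' S) ≤ ((adjoin F (φ '' S)).comap φ).map A.val := by
      rw [adjoin_le_iff]
      rintro _ ⟨s, hs, rfl⟩
      exact ⟨s, subset_adjoin F _ ⟨s, hs, rfl⟩, rfl⟩
    obtain ⟨y, hy, rfl⟩ := hle hx
    exact hy
  · rw [adjoin_le_iff]
    rintro _ ⟨s, hs, rfl⟩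
    exact ⟨⟨s, subset_adjoin F _ ⟨s, hs, rfl⟩⟩, rfl⟩

theorem fieldRange_comp_inclusion_pair {A L : IntermediateField F Ω} (φ : A →ₐ[F] B) (x y : A)
    (hL : L = adjoin F {(x : Ω), (y : Ω)}) (h : L ≤ A) :
    (φ.comp (inclusion h)).fieldRange = adjoin F {φ x, φ y} := by
  rw [fieldRange_comp_inclusion φ (S := {x, y}) (by rw [hL, Set.image_pair]), Set.image_pair]

theorem finrank_fieldRange {L : Type*} [Field L] [Algebra F L] (ψ : L →ₐ[F] B) :
    Module.finrank F ψ.fieldRange = Module.finrank F L :=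
  (AlgEquiv.ofInjectiveField ψ).toLinearEquiv.finrank_eq.symm

variable {p : ℕ} [hp : Fact p.Prime] [IsUltrametricDist B] [Algebra ℚ_[p] F] [Algebra ℚ_[p] Ω]
  [Algebra ℚ_[p] B] [IsScalarTower ℚ_[p] F Ω] [IsScalarTower ℚ_[p] F B]
  [FiniteDimensional ℚ_[p] F]

theorem exists_isUnif_of_eAbs (hB : ∀ x : B, ‖x‖ = spectralNorm ℚ_[p] B x) {L : Type*} [Field L]
    [Algebra F L] [Algebra ℚ_[p] L] [IsScalarTower ℚ_[p] F L] (ψ : L →ₐ[F] B)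
    (hpos : 0 < Module.finrank F L) (he : eAbs p L = Module.finrank F L) :
    ∃ ϖ, IsLocalUnif (ψ.restrictScalars ℚ_[p]) ϖ ∧ IsUnif ‖(p : B)‖ ψ.fieldRange (ψ ϖ) := by
  have : FiniteDimensional F L := FiniteDimensional.of_finrank_pos hpos
  have : FiniteDimensional ℚ_[p] L := FiniteDimensional.trans ℚ_[p] F L
  obtain ⟨ϖ, hϖ⟩ := exists_isLocalUnif hB (ψ.restrictScalars ℚ_[p])
  refine ⟨ϖ, hϖ, ⟨ϖ, rfl⟩, ?_, ?_⟩
  · rwa [finrank_fieldRange]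
  · rw [finrank_fieldRange, ← he]
    exact (norm_prime_eq_pow_eAbs hB hϖ).symm

theorem discreteBase_of_unramified (hB : ∀ x : B, ‖x‖ = spectralNorm ℚ_[p] B x)
    (hunram : maxIdeal p F = Ideal.span {(p : ringOfInt p F)}) :
    DiscreteBase F B ‖(p : B)‖ := by
  have hϖ := isLocalUnif_prime hB hunram ((Algebra.ofId F B).restrictScalars ℚ_[p])
  have hpB : (Algebra.ofId F B).restrictScalars ℚ_[p] (p : F) = (p : B) := map_natCast _ _
  refine ⟨hpB ▸ hϖ.norm_pos, hpB ▸ hϖ.2.1, fun k hk ↦ hpB ▸ hϖ.exists_zpow hk, fun g x ↦ ?_⟩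
  rw [hB, hB]
  exact (spectralNorm_eq_of_equiv (g.restrictScalars ℚ_[p]) x).symm

theorem hasUniqueRamJumpHom_inclusion [Normal F B]
    (hB : ∀ x : B, ‖x‖ = spectralNorm ℚ_[p] B x) (hF : DiscreteBase F B ‖(p : B)‖)
    {A L₁ L₂ : IntermediateField F Ω} (φ : A →ₐ[F] B) (h₁₂ : L₁ ≤ L₂) (h₂ : L₂ ≤ A)
    (hpos : 0 < Module.finrank F L₂) (he : eAbs p L₂ = Module.finrank F L₂)
    {K₁ K₂ : IntermediateField F B} (hK₁ : (φ.comp (inclusion (h₁₂.trans h₂))).fieldRange = K₁)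
    (hK₂ : (φ.comp (inclusion h₂)).fieldRange = K₂) {t : ℕ} (hJ : IsJump ‖(p : B)‖ K₁ K₂ t)
    (hg : ∃ g : B ≃ₐ[F] B, (∀ z ∈ K₁, g z = z) ∧ (∀ z ∈ K₂, g z ∈ K₂) ∧ ∃ z ∈ K₂, g z ≠ z) :
    HasUniqueRamJumpHom p L₁ L₂ (inclusion h₁₂).toRingHom t := by
  let := (inclusion h₁₂).toRingHom.toAlgebra
  change HasUniqueRamJump p L₁ L₂ t
  have : IsScalarTower F L₁ L₂ := IsScalarTower.of_algebraMap_eq fun x ↦ rfl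
  have : FiniteDimensional F L₂ := FiniteDimensional.of_finrank_pos hpos
  have : FiniteDimensional ℚ_[p] L₂ := FiniteDimensional.trans ℚ_[p] F L₂
  subst hK₁ hK₂
  obtain ⟨ϖ, hϖ, hy⟩ := exists_isUnif_of_eAbs hB (φ.comp (inclusion h₂)) hpos he
  obtain ⟨g, hg₁, hg₂, _, ⟨z, rfl⟩, hne⟩ := hg
  refine hasUniqueRamJump_of_isJump hB hF hϖ hy (fun _ hz ↦ AlgHom.mem_fieldRange.1 hz) hJ ?_
  obtain ⟨σ, hσ⟩ := exists_algEquiv_restricting (K := L₁) (ψ := φ.comp (inclusion h₂)) (g := g)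
    (fun k ↦ hg₁ _ ⟨k, rfl⟩) (fun x ↦ hg₂ _ ⟨x, rfl⟩)
  refine ⟨σ, fun h ↦ hne ?_⟩
  have := hσ z
  rw [h] at this
  exact this.symm

theorem kummerGrid_of_embedding (hB : ∀ x : B, ‖x‖ = spectralNorm ℚ_[p] B x)
    (hunram : maxIdeal p F = Ideal.span {(p : ringOfInt p F)}) {a : F} (haO : a ∈ ringOfInt p F)
    (hv : ¬p ∣ valInt p F a) {A : IntermediateField F Ω} (φ : A →ₐ[F] B) {ζ α : ℕ → A}
    (hζ : ∀ r, IsPrimitiveRoot (ζ r) (p ^ r)) (hζp : ∀ r, ζ (r + 1) ^ p = ζ r)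
    (hα0 : α 0 = algebraMap F A a) (hαp : ∀ s, α (s + 1) ^ p = α s)
    {L : ℕ → ℕ → IntermediateField F Ω}
    (hL : ∀ r s, L r s = adjoin F {(ζ r : Ω), (α s : Ω)}) (hLA : ∀ r s, L r s ≤ A)
    (hdeg : ∀ r s, 1 ≤ r → Module.finrank F ↥(L r s) = (p - 1) * p ^ (r - 1 + s))
    (he : ∀ r s, 1 ≤ r → eAbs p ↥(L r s) = Module.finrank F ↥(L r s)) :
    KummerGrid F p (valInt p F a) (fun r ↦ φ (ζ r)) (fun s ↦ φ (α s)) := by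
  have hrange (r s) := fieldRange_comp_inclusion_pair φ (ζ r) (α s) (hL r s) (hLA r s)
  refine ⟨discreteBase_of_unramified hB hunram, fun r ↦ (hζ r).map_of_injective φ.injective,
    fun r ↦ by rw [← map_pow, hζp], fun s ↦ by rw [← map_pow, hαp], ?_, hv, ?_, ?_⟩
  · have ha : a ≠ 0 := by
      rintro rfl
      exact hv (by rw [valInt_zero]; exact dvd_zero p)
    have hF := isLocalUnif_prime hB hunram ((Algebra.ofId F B).restrictScalars ℚ_[p])
    have hpB : (Algebra.ofId F B).restrictScalars ℚ_[p] (p : F) = (p : B) := map_natCast _ _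
    have := norm_eq_pow_valInt hB hF ha haO
    rw [hpB] at this
    rw [hα0, φ.commutes]
    exact this
  · intro r s hr
    rw [← hrange, finrank_fieldRange, hdeg r s hr]
  · intro r s hr
    have hpos : 0 < Module.finrank F (L r s) := by
      rw [hdeg r s hr]
      exact Nat.mul_pos (Nat.sub_pos_of_lt hp.out.one_lt) (pow_pos hp.out.pos _)
    obtain ⟨ϖ, -, hy⟩ := exists_isUnif_of_eAbs hB (φ.comp (inclusion (hLA r s))) hpos (he r s hr)
    rw [hrange] at hy
    exact ⟨_, hy⟩

theorem exists_ramJumps_of_embedding [IsGalois F B] (hp2 : p ≠ 2)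
    (hB : ∀ x : B, ‖x‖ = spectralNorm ℚ_[p] B x)
    (hunram : maxIdeal p F = Ideal.span {(p : ringOfInt p F)}) {a : F} (haO : a ∈ ringOfInt p F)
    (hv : ¬p ∣ valInt p F a) {A : IntermediateField F Ω} (φ : A →ₐ[F] B) {ζ α : ℕ → A}
    (hζ : ∀ r, IsPrimitiveRoot (ζ r) (p ^ r)) (hζp : ∀ r, ζ (r + 1) ^ p = ζ r)
    (hα0 : α 0 = algebraMap F A a) (hαp : ∀ s, α (s + 1) ^ p = α s)
    {L : ℕ → ℕ → IntermediateField F Ω}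
    (hL : ∀ r s, L r s = adjoin F {(ζ r : Ω), (α s : Ω)}) (hLA : ∀ r s, L r s ≤ A)
    (hdeg : ∀ r s, 1 ≤ r → Module.finrank F ↥(L r s) = (p - 1) * p ^ (r - 1 + s))
    (he : ∀ r s, 1 ≤ r → eAbs p ↥(L r s) = Module.finrank F ↥(L r s)) (k s : ℕ) :
    (∀ h : L (k + 1) s ≤ L (k + 2) s, ∃ t,
      HasUniqueRamJumpHom p (L (k + 1) s) (L (k + 2) s) (inclusion h).toRingHom t ∧
        KummerGrid.HorValue p k s t) ∧
    (∀ h : L (k + 1) s ≤ L (k + 1) (s + 1), ∃ t,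
      HasUniqueRamJumpHom p (L (k + 1) s) (L (k + 1) (s + 1)) (inclusion h).toRingHom t ∧
        KummerGrid.VerValue p k s t) := by
  have hgrid := kummerGrid_of_embedding hB hunram haO hv φ hζ hζp hα0 hαp hL hLA hdeg he
  have hrange (r s) := fieldRange_comp_inclusion_pair φ (ζ r) (α s) (hL r s) (hLA r s)
  have hpos (r s) (hr : 1 ≤ r) : 0 < Module.finrank F (L r s) := by
    rw [hdeg r s hr]
    exact Nat.mul_pos (Nat.sub_pos_of_lt hp.out.one_lt) (pow_pos hp.out.pos _)
  constructor
  · intro h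
    obtain ⟨t, hJ, ht⟩ := hgrid.exists_horJump hp2 k s
    exact ⟨t, hasUniqueRamJumpHom_inclusion hB hgrid.base φ h (hLA _ _) (hpos _ _ (by omega))
      (he _ _ (by omega)) (hrange _ _) (hrange _ _) hJ
      (hgrid.exists_algEquiv_moving_left (by omega) s), ht⟩
  · intro h
    obtain ⟨t, hJ, ht⟩ := hgrid.exists_verJump hp2 k s
    exact ⟨t, hasUniqueRamJumpHom_inclusion hB hgrid.base φ h (hLA _ _) (hpos _ _ (by omega))
      (he _ _ (by omega)) (hrange _ _) (hrange _ _) hJ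
      (hgrid.exists_algEquiv_moving_right (by omega) s), ht⟩

end Embedding

/-- Let `p` be an odd prime, `F/ℚ_p` finite unramified, `a ∈ 𝒪_F \ 𝒪_F^p` with
`p ∤ v_F(a)`, and suppose the fields `L_{r,s} = F(ζ_{p^r}, a^{1/p^s})` satisfy the
standing hypotheses.  Writing `t_{1,2}(r,s)` for the unique jump of `L_{r,s}/L_{r,s-1}`
and `t_{1,1}(r,s)` for the unique jump of `L_{r,s}/L_{r-1,s}`, one has, for `r > s ≥ 1`:
`t_{1,2}(s,s) = (p^{2s}+p^{2s-2}+p-1)/(p+1)`, `t_{1,2}(r,s) = (2p^{2s}+p-1)/(p+1)`,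
and for `r > s+1`: `t_{1,1}(r,s) = p^{r+s-1} - (2p^{2s+1}-p+1)/(p+1)`
(all stated multiplied out by `p+1`). -/
theorem jump_formulas_of_not_dvd_val (p : ℕ) [Fact p.Prime] (hp : p ≠ 2)
    (F Ω : Type*) [Field F] [Field Ω]
    [Algebra ℚ_[p] F] [FiniteDimensional ℚ_[p] F]
    (hunram : maxIdeal p F = Ideal.span {(p : ringOfInt p F)})
    [Algebra F Ω] [Algebra ℚ_[p] Ω] [IsScalarTower ℚ_[p] F Ω]
    (a : F) (haO : a ∈ ringOfInt p F) (haP : ¬∃ b ∈ ringOfInt p F, b ^ p = a)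
    (hv : ¬p ∣ valInt p F a)
    (ζ : ℕ → Ω) (hζ : ∀ r, IsPrimitiveRoot (ζ r) (p ^ r)) (hζp : ∀ r, ζ (r + 1) ^ p = ζ r)
    (α : ℕ → Ω) (hα0 : α 0 = algebraMap F Ω a) (hαp : ∀ s, α (s + 1) ^ p = α s)
    (L : ℕ → ℕ → IntermediateField F Ω)
    (hL : ∀ r s, L r s = IntermediateField.adjoin F {ζ r, α s})
    (hmono : ∀ r s r' s', r ≤ r' → s ≤ s' → L r s ≤ L r' s')
    (hdeg : ∀ r s, 1 ≤ r → Module.finrank F ↥(L r s) = (p - 1) * p ^ (r - 1 + s))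
    (hram : ∀ r s, 1 ≤ r →
      eAbs p ↥(L r s) = Module.finrank F ↥(L r s) * eAbs p F) :
    ∀ r s : ℕ, 1 ≤ s → s < r →
      (∃ t : ℕ, HasUniqueRamJumpHom p ↥(L s (s - 1)) ↥(L s s)
          (IntermediateField.inclusion (hmono s (s - 1) s s le_rfl (Nat.sub_le s 1))).toRingHom
          t ∧
        (p + 1) * t = p ^ (2 * s) + p ^ (2 * s - 2) + p - 1) ∧
      (∃ t : ℕ, HasUniqueRamJumpHom p ↥(L r (s - 1)) ↥(L r s)
          (IntermediateField.inclusion (hmono r (s - 1) r s le_rfl (Nat.sub_le s 1))).toRingHom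
          t ∧
        (p + 1) * t = 2 * p ^ (2 * s) + p - 1) ∧
      (s + 1 < r →
        ∃ t : ℕ, HasUniqueRamJumpHom p ↥(L (r - 1) s) ↥(L r s)
            (IntermediateField.inclusion (hmono (r - 1) s r s (Nat.sub_le r 1) le_rfl)).toRingHom
            t ∧
          (p + 1) * t + 2 * p ^ (2 * s + 1) + 1 = (p + 1) * p ^ (r + s - 1) + p) := by
  have hp1 : 1 ≤ p := (Fact.out : p.Prime).one_le
  let A := algebraicClosure F Ω
  have hζA (r) : ζ r ∈ A := mem_algebraicClosure_iff.2 <| by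
    have h1 : IsAlgebraic F (ζ r ^ p ^ r) := (hζ r).pow_eq_one ▸ isAlgebraic_one
    exact h1.of_pow (pow_pos hp1 r)
  have hαA (s) : α s ∈ A := by
    induction s with
    | zero => exact hα0 ▸ A.algebraMap_mem a
    | succ s ih =>
      exact mem_algebraicClosure_iff.2
        (IsAlgebraic.of_pow hp1 ((hαp s).symm ▸ mem_algebraicClosure_iff.1 ih))
  have hLA (r s) : L r s ≤ A := by
    rw [hL, IntermediateField.adjoin_le_iff]
    rintro x (rfl | rfl)
    exacts [hζA r, hαA s]
  have : Algebra.IsAlgebraic ℚ_[p] (AlgebraicClosure F) := Algebra.IsAlgebraic.trans ℚ_[p] F _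
  have : CharZero F := charZero_of_injective_algebraMap (algebraMap ℚ_[p] F).injective
  let : NormedField (AlgebraicClosure F) := spectralNorm.normedField ℚ_[p] (AlgebraicClosure F)
  have : IsUltrametricDist (AlgebraicClosure F) :=
    IsUltrametricDist.isUltrametricDist_of_isNonarchimedean_norm isNonarchimedean_spectralNorm
  have hB (x : AlgebraicClosure F) : ‖x‖ = spectralNorm ℚ_[p] (AlgebraicClosure F) x := rfl
  let φ : A →ₐ[F] AlgebraicClosure F := IsAlgClosed.lift
  have he (r s) (hr : 1 ≤ r) : eAbs p ↥(L r s) = Module.finrank F ↥(L r s) := by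
    rw [hram r s hr, eAbs_eq_one hB hunram ((Algebra.ofId F _).restrictScalars ℚ_[p]), mul_one]
  have key := exists_ramJumps_of_embedding hp hB hunram haO hv φ
    (ζ := fun r ↦ ⟨ζ r, hζA r⟩) (α := fun s ↦ ⟨α s, hαA s⟩)
    (fun r ↦ (hζ r).of_map_of_injective (f := A.val) A.val.injective)
    (fun r ↦ Subtype.ext (hζp r)) (Subtype.ext hα0) (fun s ↦ Subtype.ext (hαp s)) hL hLA hdeg he
  intro r s hs hsr
  obtain ⟨s, rfl⟩ : ∃ s', s = s' + 1 := ⟨s - 1, by omega⟩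
  obtain ⟨r, rfl⟩ : ∃ r', r = r' + 2 := ⟨r - 2, by omega⟩
  refine ⟨?_, ?_, fun hr ↦ ?_⟩
  · obtain ⟨t, ht, hval⟩ := (key s s).2 (hmono _ _ _ _ le_rfl (Nat.le_succ s))
    refine ⟨t, ht, ?_⟩
    have := hval.1 (by omega)
    rw [show (p + 1) * p ^ (s + s + 1) = p ^ (2 * (s + 1)) + p ^ (2 * s + 1) by ring] at this
    rw [show 2 * (s + 1) - 2 = 2 * s by omega]
    omega
  · obtain ⟨t, ht, hval⟩ := (key (r + 1) s).2 (hmono _ _ _ _ le_rfl (Nat.le_succ s))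
    refine ⟨t, ht, ?_⟩
    have := hval.2 (by omega)
    rw [show 2 * (s + 1) = 2 * s + 2 by ring]
    omega
  · obtain ⟨t, ht, hval⟩ := (key r (s + 1)).1 (hmono _ _ _ _ (Nat.le_succ _) le_rfl)
    refine ⟨t, ht, ?_⟩
    have := hval.1 (by omega)
    rw [show r + 2 + (s + 1) - 1 = r + 1 + (s + 1) by omega]
    exact this
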